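/- arXiv:1708.06411 — 2 statements merged into one kernel-verified Lean document; each statement's English description precedes it below -/
import Mathlib

section
/- Every tree T on n vertices with maximum degree Δ satisfies MinBis(T) ≤ 8·Δ / diam*(T). -/
open scoped Classical

namespace MinBisection

noncomputable section

variable {V ι : Type*}

/-- The number of edges of `G` with one endpoint in `B` and the other outside of `B`,
i.e., the width `e_G(B, W)` of the cut `(B, W)` where `W` is the complement of `B`. -/
def cutWidth (G : SimpleGraph V) (B : Finset V) : ℕ :=
  Nat.card {e : Sym2 V // ∃ x y, G.Adj x y ∧ x ∈ B ∧ y ∉ B ∧ e = s(x, y)}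

/-- The number of edges of `G` whose endpoints lie in two different parts of the
partition `(B, W, Z)` of the vertex set. -/
def cutWidth3 (G : SimpleGraph V) (B W Z : Finset V) : ℕ :=
  Nat.card {e : Sym2 V // ∃ x y, G.Adj x y ∧ e = s(x, y) ∧
    ¬ ((x ∈ B ∧ y ∈ B) ∨ (x ∈ W ∧ y ∈ W) ∨ (x ∈ Z ∧ y ∈ Z))}

/-- `(B, Bᶜ)` is a bisection: the sizes of the two parts differ by at most one. -/
def IsBisection [Fintype V] (B : Finset V) : Prop :=
  B.card ≤ Bᶜ.card + 1 ∧ Bᶜ.card ≤ B.card + 1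

/-- The minimum bisection width `MinBis(G)`. -/
def minBis (G : SimpleGraph V) [Fintype V] : ℕ :=
  sInf {k | ∃ B : Finset V, IsBisection B ∧ cutWidth G B = k}

/-- The maximum degree `Δ(G)`. -/
def maxDeg (G : SimpleGraph V) [Fintype V] : ℕ :=
  Finset.univ.sup fun v => Nat.card {u // G.Adj v u}

/-- The number of vertices on a longest path in `G`. -/
def longestPathCard (G : SimpleGraph V) : ℕ :=
  sSup {k | ∃ (u v : V) (p : G.Walk u v), p.IsPath ∧ k = p.support.length}

/-- The relative diameter `diam*` of a connected graph: the number of vertices on a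
longest path divided by the number of vertices. -/
def diamStar (G : SimpleGraph V) [Fintype V] : ℝ :=
  (longestPathCard G : ℝ) / (Fintype.card V : ℝ)

/-- The number of vertices on a longest path contained in the connected component `c`. -/
def compLongestPathCard (G : SimpleGraph V) (c : G.ConnectedComponent) : ℕ :=
  sSup {k | ∃ (u v : V) (p : G.Walk u v), p.IsPath ∧ G.connectedComponentMk u = c ∧
    k = p.support.length}

/-- The relative diameter `diam*` of a forest: the sum over all connected components of the
number of vertices on a longest path in the component, divided by the number of vertices. -/
def forestDiamStar (G : SimpleGraph V) [Fintype V] : ℝ :=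
  letI : Fintype G.ConnectedComponent := Fintype.ofFinite _
  (∑ c : G.ConnectedComponent, (compLongestPathCard G c : ℝ)) / (Fintype.card V : ℝ)

/-- `(T, X)` is a tree decomposition of `G`. -/
structure IsTreeDecomp (G : SimpleGraph V) (T : SimpleGraph ι) (X : ι → Finset V) : Prop where
  isTree : T.IsTree
  mem_cluster : ∀ v : V, ∃ i, v ∈ X i
  edge_cluster : ∀ ⦃u v : V⦄, G.Adj u v → ∃ i, u ∈ X i ∧ v ∈ X i
  inter_subset : ∀ ⦃i j : ι⦄ (p : T.Walk i j), p.IsPath → ∀ h ∈ p.support, X i ∩ X j ⊆ X h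

/-- The weight `w(P, X)` of a path `p` of the tree `T` with respect to the clusters `X`:
the cardinality of the union of the clusters along the path. -/
def walkWeight (X : ι → Finset V) {T : SimpleGraph ι} {i j : ι} (p : T.Walk i j) : ℕ :=
  (p.support.toFinset.biUnion X).card

/-- The relative weight `r(T, X)` of a heaviest path in the tree decomposition `(T, X)`. -/
def rTD [Fintype V] (T : SimpleGraph ι) (X : ι → Finset V) : ℝ :=
  (↑(sSup {w : ℕ | ∃ (i j : ι) (p : T.Walk i j), p.IsPath ∧ w = walkWeight X p}) : ℝ) /
    (Fintype.card V : ℝ)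

/-- The path `p` is nonredundant: one of its two ends `i` is a nonredundant end, i.e.,
`X i ≠ ∅` and no cluster along the path contains the previous one when traversed from `i`. -/
def NonredundantPath (X : ι → Finset V) {T : SimpleGraph ι} {i j : ι} (p : T.Walk i j) : Prop :=
  (X i ≠ ∅ ∧ List.Chain' (fun a b => ¬ X b ⊆ X a) p.support) ∨
  (X j ≠ ∅ ∧ List.Chain' (fun a b => ¬ X b ⊆ X a) p.reverse.support)

/-- `R_i`: the set of vertices whose path node (first node along `p`, traversed from the
end `i₀`, whose cluster contains the vertex) is `i`. -/
def Rset (X : ι → Finset V) {T : SimpleGraph ι} {i₀ j₀ : ι} (p : T.Walk i₀ j₀) (i : ι) :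
    Set V :=
  {x | ∃ (k : ℕ) (hk : k < p.support.length), p.support.get ⟨k, hk⟩ = i ∧ x ∈ X i ∧
    ∀ (l : ℕ) (hl : l < k), x ∉ X (p.support.get ⟨l, hl.trans hk⟩)}

/-- `S_i`: the union of the clusters over the component `T_i` of `T - E(P)` containing `i`,
minus `R = ⋃_{h ∈ V(P)} X^h`. -/
def Sset (X : ι → Finset V) {T : SimpleGraph ι} {i₀ j₀ : ι} (p : T.Walk i₀ j₀) (i : ι) :
    Set V :=
  {x | (∃ j, (∃ q : T.Walk i j, ∀ e ∈ q.edges, e ∉ p.edges) ∧ x ∈ X j) ∧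
    ∀ h ∈ p.support, x ∉ X h}

end

end MinBisection

/-!
Let `v 0, …, v (L - 1)` be a longest path of a tree with `n` vertices. Deleting the edges of the path
splits the tree into `L` bags, one for each path vertex, its root. List the vertices bag by bag, each
bag starting with its root, and regard the list as cyclic (`exists_arrangement`). Edges only run
inside bags or between roots of consecutive bags, so a cyclic interval that starts and ends at roots
is cut off by removing two vertices.

The width of a cut is estimated by the number of vertices needed to cover its edges, times the
maximum degree (`cutWidth_le`). The main step, `exists_cut`, shows by induction on the number `N` of
vertices that an arrangement with `L` roots has, for every `m`, a set of `m` vertices whose boundary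
edges are covered by at most `8 k` vertices, where `k = N / L`.

If two roots are at cyclic distance `m`, the interval between them will do. Otherwise the set of
roots shifted by `m` avoids the roots, and by averaging (`exists_gap`) there is a bag whose
nonroots, `g` in number, receive the shifts of at least `g / (k - 1)` roots. These roots span an
interval `I` of `h ≤ g` positions, containing `a ≥ g / (k - 1)` roots. An interval between `I` and
the bag, together with a set of suitable size from `I` and the nonroots of the bag, has `m` vertices.
As the tree has no cycles, the required number of nonroots can be split off up to an error of `h` by
covering edges with `2 g / h` vertices (`exists_approx`). The error is compensated inside `I`, by
induction at cost `8 h / a`. Three further vertices cover the edges leaving these segments, and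
`8 h / a + 2 g / h + 3 ≤ 8 k` (`cover_bound`).
-/

namespace MinBisection

/-! ### Splitting forests -/

/-- Peeling one piece off a forest: if `Y` has more than `h` vertices, some `W ⊆ Y` of size between
`h / 2` and `h` is joined to the rest of `Y` through a single vertex `v` only. Take a minimal branch
with more than `h` vertices, hanging at `v`; the components left after removing `v` have at most `h`
vertices each, and `W` is a largest union of them with at most `h` vertices. -/
theorem exists_peel {V : Type*} (G : SimpleGraph V) (hG : G.IsAcyclic) (Y : Finset V) (h : ℕ)
    (hY : h < Y.card) :
    ∃ (W : Finset V) (v : V), W ⊆ Y ∧ W.card ≤ h ∧ h ≤ 2 * W.card ∧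
      ∀ a ∈ W, ∀ b ∈ Y \ W, G.Adj a b → b = v := by
  -- `v` is the lowest vertex whose branch `K` has more than `h` vertices
  have hex : ∃ k, ∃ (v : V) (K : Finset V), v ∈ K ∧ K ⊆ Y ∧ h < K.card ∧
      (∀ a ∈ K, ∀ b ∈ Y \ K, G.Adj a b → a = v) ∧ K.card = k := by
    obtain ⟨v, hv⟩ := Finset.card_pos.mp (lt_of_le_of_lt (Nat.zero_le h) hY)
    exact ⟨_, v, Y, hv, subset_rfl, hY, by simp, rfl⟩
  obtain ⟨v, K, hvK, hKY, hKh, hKout, hKk⟩ := Nat.find_spec hex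
  have hmin : ∀ (u : V) (C : Finset V), u ∈ C → C ⊆ Y →
      (∀ a ∈ C, ∀ b ∈ Y \ C, G.Adj a b → a = u) → C.card < K.card → C.card ≤ h := by
    intro u C hu hCY hC hlt
    by_contra! hcon
    exact Nat.find_min hex (hKk ▸ hlt) ⟨u, C, hu, hCY, hcon, hC, rfl⟩
  -- `H` is the graph induced on `K \ {v}`, whose components are the candidates for pieces
  let H : SimpleGraph V :=
    { Adj := fun a b => G.Adj a b ∧ a ∈ K.erase v ∧ b ∈ K.erase v
      symm := ⟨fun a b hab => ⟨hab.1.symm, hab.2.2, hab.2.1⟩⟩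
      loopless := ⟨fun a ha => G.loopless.irrefl a ha.1⟩ }
  let C : V → Finset V := fun x => (K.erase v).filter (fun z => H.Reachable x z)
  have hCsub : ∀ x, C x ⊆ K.erase v := fun x => Finset.filter_subset _ _
  have hCclosed : ∀ x, ∀ a ∈ C x, ∀ b ∈ K.erase v, G.Adj a b → b ∈ C x := by
    intro x a ha b hb hab
    have ha' := Finset.mem_filter.mp ha
    refine Finset.mem_filter.mpr ⟨hb, ha'.2.trans (SimpleGraph.Adj.reachable ?_)⟩
    exact ⟨hab, ha'.1, hb⟩
  have hCuniq : ∀ x, ∀ a ∈ C x, ∀ b ∈ C x, G.Adj a v → G.Adj b v → a = b := by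
    intro x a ha b hb hav hbv
    by_contra hne
    have hbr := SimpleGraph.isAcyclic_iff_forall_adj_isBridge.mp hG hav
    rw [SimpleGraph.isBridge_iff] at hbr
    apply hbr
    have hle : H ≤ G.deleteEdges {s(a, v)} := by
      intro c d hcd
      rw [SimpleGraph.deleteEdges_adj]
      refine ⟨hcd.1, ?_⟩
      have h1 := Finset.ne_of_mem_erase hcd.2.1
      have h2 := Finset.ne_of_mem_erase hcd.2.2
      simp [h1, h2]
    have hr : H.Reachable a b := (Finset.mem_filter.mp ha).2.symm.trans (Finset.mem_filter.mp hb).2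
    refine (hr.mono hle).trans (SimpleGraph.Adj.reachable ?_)
    rw [SimpleGraph.deleteEdges_adj]
    refine ⟨hbv, ?_⟩
    have h1 := Finset.ne_of_mem_erase (hCsub _ ha)
    simp [Ne.symm hne, hbv.ne]
  have hKe : (K.erase v).card < K.card := Finset.card_erase_lt_of_mem hvK
  -- a component is attached to the rest through its unique neighbour of `v`
  have hCcard : ∀ x, (C x).card ≤ h := by
    intro x
    by_contra! hcon
    obtain ⟨u, huC, hu⟩ : ∃ u ∈ C x, ∀ a ∈ C x, G.Adj a v → a = u := by
      by_cases hn : ∃ u ∈ C x, G.Adj u v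
      · obtain ⟨u, hu, huv⟩ := hn
        exact ⟨u, hu, fun a ha hav => hCuniq x a ha u hu hav huv⟩
      · push Not at hn
        obtain ⟨u, hu⟩ := Finset.card_pos.mp (lt_of_le_of_lt (Nat.zero_le h) hcon)
        exact ⟨u, hu, fun a ha hav => absurd hav (hn a ha)⟩
    have := hmin u (C x) huC (((hCsub x).trans (Finset.erase_subset _ _)).trans hKY) ?_
      (lt_of_le_of_lt (Finset.card_le_card (hCsub x)) hKe)
    · omega
    intro a ha b hb hab
    rw [Finset.mem_sdiff] at hb
    by_cases hbv : b = v
    · subst hbv; exact hu a ha hab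
    exfalso
    by_cases hbK : b ∈ K
    · exact hb.2 (hCclosed x a ha b (Finset.mem_erase.mpr ⟨hbv, hbK⟩) hab)
    · have haK := Finset.mem_erase.mp (hCsub x ha)
      exact haK.1 (hKout a haK.2 b (Finset.mem_sdiff.mpr ⟨hb.1, hbK⟩) hab)
  -- any union of components works as far as edges are concerned
  have hgood : ∀ W ⊆ K.erase v, (∀ a ∈ W, ∀ b ∈ K.erase v, G.Adj a b → b ∈ W) →
      ∀ a ∈ W, ∀ b ∈ Y \ W, G.Adj a b → b = v := by
    intro W hW hWc a ha b hb hab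
    rw [Finset.mem_sdiff] at hb
    by_contra hbv
    by_cases hbK : b ∈ K
    · exact hb.2 (hWc a ha b (Finset.mem_erase.mpr ⟨hbv, hbK⟩) hab)
    · have haK := Finset.mem_erase.mp (hW ha)
      exact haK.1 (hKout a haK.2 b (Finset.mem_sdiff.mpr ⟨hb.1, hbK⟩) hab)
  have hsubY : K.erase v ⊆ Y := (Finset.erase_subset _ _).trans hKY
  -- a largest admissible union of components
  obtain ⟨W, hWmem, hWmax⟩ := Finset.exists_max_image
    ((K.erase v).powerset.filter (fun W => W.card ≤ h ∧
      ∀ a ∈ W, ∀ b ∈ K.erase v, G.Adj a b → b ∈ W)) Finset.card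
    ⟨∅, by simp⟩
  simp only [Finset.mem_filter, Finset.mem_powerset] at hWmem hWmax
  obtain ⟨hW, hWh, hWc⟩ := hWmem
  refine ⟨W, v, hW.trans hsubY, hWh, ?_, hgood W hW hWc⟩
  by_contra! hsmall
  obtain ⟨x, hx, hxW⟩ : ∃ x ∈ K.erase v, x ∉ W := by
    by_contra! hcon
    have := Finset.card_le_card hcon
    rw [Finset.card_erase_of_mem hvK] at this
    omega
  have h1 := hWmax (C x) ⟨hCsub x, hCcard x, hCclosed x⟩
  have h2 := Finset.card_union_le W (C x)
  have h3 := hWmax (W ∪ C x) ⟨Finset.union_subset hW (hCsub x), by omega, by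
    intro a ha b hb hab
    rcases Finset.mem_union.mp ha with ha | ha
    · exact Finset.mem_union_left _ (hWc a ha b hb hab)
    · exact Finset.mem_union_right _ (hCclosed x a ha b hb hab)⟩
  have h4 : W.card < (W ∪ C x).card := by
    apply Finset.card_lt_card
    rw [Finset.ssubset_iff_of_subset Finset.subset_union_left]
    exact ⟨x, Finset.mem_union_right _ (Finset.mem_filter.mpr ⟨hx, SimpleGraph.Reachable.refl x⟩), hxW⟩
  omega

/-- A subset `U` of a forest `Y` of prescribed size `q`, up to an error of `h`, all of whose edges to
the rest of `Y` are covered by a set `S` of at most `2 q / h` vertices: peel off pieces of size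
between `h / 2` and `h` until at most `h` vertices are missing. -/
theorem exists_approx {V : Type*} (G : SimpleGraph V) (hG : G.IsAcyclic) (h : ℕ) (hh : 0 < h) :
    ∀ (q : ℕ) (Y : Finset V), q ≤ Y.card →
    ∃ U S : Finset V, U ⊆ Y ∧ U.card ≤ q ∧ q ≤ U.card + h ∧ S.card * h ≤ 2 * q ∧
      ∀ a ∈ U, ∀ b ∈ Y \ U, G.Adj a b → a ∈ S ∨ b ∈ S := by
  intro q
  induction q using Nat.strong_induction_on with
  | _ q ih =>
  intro Y hq
  by_cases hqh : q ≤ h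
  · exact ⟨∅, ∅, by simp, by simp, by simpa using hqh, by simp, by simp⟩
  push Not at hqh
  obtain ⟨W, v, hWY, hWh, hW2, hWv⟩ := exists_peel G hG Y h (by omega)
  have hcard := Finset.card_sdiff_add_card_eq_card hWY
  obtain ⟨U, S, hU, hUq, hqU, hS, hUS⟩ := ih (q - W.card) (by omega) (Y \ W) (by omega)
  have hdis : Disjoint W U := Finset.disjoint_of_subset_right hU Finset.disjoint_sdiff
  have hcU := Finset.card_union_of_disjoint hdis
  refine ⟨W ∪ U, insert v S, Finset.union_subset hWY (hU.trans Finset.sdiff_subset),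
    by omega, by omega, ?_, ?_⟩
  · have := Finset.card_insert_le v S
    calc (insert v S).card * h ≤ (S.card + 1) * h := Nat.mul_le_mul_right _ this
      _ = S.card * h + h := by ring
      _ ≤ 2 * q := by omega
  · intro a ha b hb hab
    simp only [Finset.mem_sdiff, Finset.mem_union, not_or] at hb
    rcases Finset.mem_union.mp ha with ha | ha
    · right
      rw [hWv a ha b (Finset.mem_sdiff.mpr ⟨hb.1, hb.2.1⟩) hab]
      exact Finset.mem_insert_self _ _
    · rcases hUS a ha b (by simp [hb]) hab with h1 | h1
      · exact Or.inl (Finset.mem_insert_of_mem h1)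
      · exact Or.inr (Finset.mem_insert_of_mem h1)

/-! ### Shifting a subset of the cyclic group -/

theorem mod_cases {a N : ℕ} (h : a < 2 * N) :
    (a < N ∧ a % N = a) ∨ (N ≤ a ∧ a % N = a - N) := by
  rcases lt_or_ge a N with h1 | h1
  · exact Or.inl ⟨h1, Nat.mod_eq_of_lt h1⟩
  · exact Or.inr ⟨h1, by rw [Nat.mod_eq_sub_mod h1, Nat.mod_eq_of_lt (by omega)]⟩

/-- Let `P` be a nonempty set of `L` positions in `ℤ / N`. If no two of its elements differ by `m`,
then the translate `P + m` lies in the gaps of `P`. Counting the elements of `P` gap by gap, some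
gap of length `g = e - c - 1` receives at least `L g / (N - L)` of them. Measured from the first
element `x` of `P` whose translate falls into that gap, the gap is `(c, e)`, the last such element
is `y`, and all of these elements lie in `[0, y]`. -/
theorem exists_gap (N m : ℕ) (P : ℕ → Prop) (h0 : P 0) (hm : 0 < m) (hmN : m < N) :
    ∃ x < N, P x ∧ (P ((x + m) % N) ∨ ∃ y c e, y ≤ c ∧ c < m ∧ y + m < e ∧ e ≤ N ∧
      P ((x + y) % N) ∧ P ((x + c) % N) ∧ (e = N ∨ P ((x + e) % N)) ∧
      (∀ z, c < z → z < e → ¬ P ((x + z) % N)) ∧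
      ((Finset.range N).filter P).card * (e - c - 1) ≤
        ((Finset.range (y + 1)).filter (fun z => P ((x + z) % N))).card *
          (N - ((Finset.range N).filter P).card)) := by
  by_cases hex : ∃ x < N, P x ∧ P ((x + m) % N)
  · obtain ⟨x, h1, h2, h3⟩ := hex
    exact ⟨x, h1, h2, Or.inl h3⟩
  push Not at hex
  have hN : 0 < N := by omega
  set A := (Finset.range N).filter P with hA
  have h0A : 0 ∈ A := by simp [hA, h0, hN]
  set Q := (Finset.range N).filter (fun z => ¬ P z) with hQ
  have hAQ : A.card + Q.card = N := by
    have := Finset.card_filter_add_card_filter_not (s := Finset.range N) P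
    simpa using this
  -- the last `P`-position up to `z`
  let pr : ℕ → ℕ := fun z => Nat.findGreatest P z
  have hpr : ∀ z, P (pr z) := fun z => Nat.findGreatest_spec (Nat.zero_le z) h0
  have hprle : ∀ z, pr z ≤ z := fun z => Nat.findGreatest_le z
  have hprgt : ∀ z k, pr z < k → k ≤ z → ¬ P k := fun z k => Nat.findGreatest_is_greatest
  let φ : ℕ → ℕ := fun x => pr ((x + m) % N)
  obtain ⟨c₀, hc₀, hineq⟩ : ∃ c ∈ A.image φ,
      A.card * (Q.filter (fun z => pr z = c)).card ≤
        (A.filter (fun x => φ x = c)).card * Q.card := by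
    by_contra! hcon
    have hlt := Finset.sum_lt_sum_of_nonempty (Finset.Nonempty.image ⟨0, h0A⟩ φ) hcon
    rw [← Finset.sum_mul, ← Finset.mul_sum,
      ← Finset.card_eq_sum_card_image φ A] at hlt
    have hle : ∑ c ∈ A.image φ, (Q.filter (fun z => pr z = c)).card ≤ Q.card := by
      rw [Finset.sum_card_fiberwise_eq_card_filter]
      exact Finset.card_filter_le _ _
    exact absurd (Nat.mul_le_mul_left A.card hle) (not_le.mpr hlt)
  -- the `P`-free stretch after `c₀` ends at `e₀`
  have hene : ∃ e, c₀ < e ∧ (e = N ∨ P e) := by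
    obtain ⟨x, hx, rfl⟩ := Finset.mem_image.mp hc₀
    exact ⟨N, lt_of_le_of_lt (hprle _) (Nat.mod_lt _ hN), Or.inl rfl⟩
  have hc₀N : c₀ < N := by
    obtain ⟨x, hx, rfl⟩ := Finset.mem_image.mp hc₀
    exact lt_of_le_of_lt (hprle _) (Nat.mod_lt _ hN)
  have hc₀P : P c₀ := by
    obtain ⟨x, hx, rfl⟩ := Finset.mem_image.mp hc₀
    exact hpr _
  obtain ⟨e₀, ⟨hce, he₀⟩, hemin⟩ : ∃ e, (c₀ < e ∧ (e = N ∨ P e)) ∧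
      ∀ z, c₀ < z → z < e → ¬ (z = N ∨ P z) :=
    ⟨Nat.find hene, Nat.find_spec hene, fun z h1 h2 h3 => Nat.find_min hene h2 ⟨h1, h3⟩⟩
  have heN : e₀ ≤ N := by
    by_contra! hcon
    exact hemin N hc₀N hcon (Or.inl rfl)
  have hgapP : ∀ z, c₀ < z → z < e₀ → ¬ P z := fun z h1 h2 h3 => hemin z h1 h2 (Or.inr h3)
  have hgapcard : (Q.filter (fun z => pr z = c₀)).card = e₀ - c₀ - 1 := by
    rw [← Nat.card_Ioo]
    congr 1
    ext z
    simp only [hQ, Finset.mem_filter, Finset.mem_range, Finset.mem_Ioo]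
    constructor
    · rintro ⟨⟨hzN, hzP⟩, rfl⟩
      have h1 := hprle z
      have h2 : pr z ≠ z := fun h => hzP (h ▸ hpr z)
      refine ⟨by omega, ?_⟩
      by_contra! hcon
      rcases he₀ with h | h
      · omega
      · exact hprgt z e₀ hce hcon h
    · rintro ⟨h1, h2⟩
      refine ⟨⟨by omega, hgapP z h1 h2⟩, ?_⟩
      apply le_antisymm
      · by_contra! hcon
        exact hgapP _ hcon (lt_of_le_of_lt (hprle z) h2) (hpr z)
      · by_contra! hcon
        exact hprgt z c₀ hcon h1.le hc₀P
  -- the `P`-positions whose shift by `m` falls into this stretch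
  set F := A.filter (fun x => φ x = c₀) with hF
  have hFmem : ∀ x ∈ F, x < N ∧ P x ∧ c₀ < (x + m) % N ∧ (x + m) % N < e₀ := by
    intro x hx
    simp only [hF, hA, Finset.mem_filter, Finset.mem_range] at hx
    obtain ⟨⟨hxN, hxP⟩, hx3⟩ := hx
    have h1 := hprle ((x + m) % N)
    have h2 : pr ((x + m) % N) ≠ (x + m) % N := fun h => hex x hxN hxP (h ▸ hpr _)
    have hx3' : pr ((x + m) % N) = c₀ := hx3
    refine ⟨hxN, hxP, by omega, ?_⟩
    by_contra! hcon
    have h4 := Nat.mod_lt (x + m) hN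
    rcases he₀ with h | h
    · omega
    · exact hprgt ((x + m) % N) e₀ (by omega) hcon h
  have hFne : F.Nonempty := by
    obtain ⟨x, hx, hxc⟩ := Finset.mem_image.mp hc₀
    exact ⟨x, Finset.mem_filter.mpr ⟨hx, hxc⟩⟩
  obtain ⟨x, hxF, hxmin⟩ := Finset.exists_min_image F (fun x => (x + m) % N) hFne
  obtain ⟨y, hyF, hymax⟩ := Finset.exists_max_image F (fun x => (x + m) % N) hFne
  obtain ⟨hxN, hxP, hx1, hx2⟩ := hFmem x hxF
  obtain ⟨hyN, hyP, hy1, hy2⟩ := hFmem y hyF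
  have hxy := hxmin y hyF
  have hxgap : ¬ (c₀ < x ∧ x < e₀) := fun h => hgapP x h.1 h.2 hxP
  -- offsets from `x` of the elements of `F`
  have hoff : ∀ x' ∈ F, (x + ((x' + m) % N - (x + m) % N)) % N = x' := by
    intro x' hx'
    obtain ⟨g1, g2, g3, g4⟩ := hFmem x' hx'
    have g5 := hxmin x' hx'
    rcases mod_cases (a := x + m) (N := N) (by omega) with ⟨a1, a2⟩ | ⟨a1, a2⟩ <;>
    rcases mod_cases (a := x' + m) (N := N) (by omega) with ⟨b1, b2⟩ | ⟨b1, b2⟩ <;>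
    rcases mod_cases (a := x + ((x' + m) % N - (x + m) % N)) (N := N) (by omega)
      with ⟨d1, d2⟩ | ⟨d1, d2⟩ <;> omega
  have hoffy := hoff y hyF
  have hux : (x + m) % N - c₀ ≤ m := by
    rcases mod_cases (a := x + m) (N := N) (by omega) with ⟨a1, a2⟩ | ⟨a1, a2⟩ <;> omega
  have hrot : ∀ z, z < e₀ → m + z - (x + m) % N < N ∧
      (c₀ ≤ z → (x + (m + z - (x + m) % N)) % N = z) := by
    intro z hz
    rcases mod_cases (a := x + m) (N := N) (by omega) with ⟨a1, a2⟩ | ⟨a1, a2⟩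
    · refine ⟨by omega, fun hz' => ?_⟩
      rcases mod_cases (a := x + (m + z - (x + m) % N)) (N := N) (by omega)
        with ⟨d1, d2⟩ | ⟨d1, d2⟩ <;> omega
    · refine ⟨by omega, fun hz' => ?_⟩
      rcases mod_cases (a := x + (m + z - (x + m) % N)) (N := N) (by omega)
        with ⟨d1, d2⟩ | ⟨d1, d2⟩ <;> omega
  have hgap' : ∀ z, m - ((x + m) % N - c₀) < z → z < m + e₀ - (x + m) % N →
      ¬ P ((x + z) % N) := by
    intro z hz1 hz2
    have := (hrot (z + (x + m) % N - m) (by omega)).2 (by omega)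
    have hz3 : m + (z + (x + m) % N - m) - (x + m) % N = z := by omega
    rw [hz3] at this
    rw [this]
    exact hgapP _ (by omega) (by omega)
  refine ⟨x, hxN, hxP, Or.inr ⟨(y + m) % N - (x + m) % N, m - ((x + m) % N - c₀),
    m + e₀ - (x + m) % N, ?_, by omega, by omega, ?_, ?_, ?_, ?_, hgap', ?_⟩⟩
  · by_contra! hcon
    apply hgap' _ hcon (by omega)
    rw [hoffy]
    exact hyP
  · have := (hrot (e₀ - 1) (by omega)).1
    omega
  · rw [hoffy]; exact hyP
  · have := (hrot c₀ hce).2 le_rfl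
    have h3 : m + c₀ - (x + m) % N = m - ((x + m) % N - c₀) := by omega
    rw [h3] at this
    rw [this]; exact hc₀P
  · by_cases hlast : m + e₀ - (x + m) % N = N
    · exact Or.inl hlast
    right
    have key : (x + (m + e₀ - (x + m) % N)) % N = if e₀ = N then 0 else e₀ := by
      rcases mod_cases (a := x + m) (N := N) (by omega) with ⟨a1, a2⟩ | ⟨a1, a2⟩ <;>
      rcases mod_cases (a := x + (m + e₀ - (x + m) % N)) (N := N) (by omega)
        with ⟨d1, d2⟩ | ⟨d1, d2⟩ <;> split_ifs <;> omega
    rw [key]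
    split_ifs with h
    · exact h0
    · exact he₀.resolve_left h
  · have hFle : F.card ≤ ((Finset.range ((y + m) % N - (x + m) % N + 1)).filter
        (fun z => P ((x + z) % N))).card := by
      apply Finset.card_le_card_of_injOn (fun x' => (x' + m) % N - (x + m) % N)
      · intro x' hx'
        have g1 := hymax x' hx'
        simp only [Finset.coe_filter, Finset.mem_range, Set.mem_ofPred_eq]
        refine ⟨by omega, ?_⟩
        rw [hoff x' hx']
        exact (hFmem x' hx').2.1
      · intro x₁ h₁ x₂ h₂ heq
        simp only at heq
        rw [← hoff x₁ h₁, ← hoff x₂ h₂, heq]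
    have hgs : m + e₀ - (x + m) % N - (m - ((x + m) % N - c₀)) - 1 = e₀ - c₀ - 1 := by omega
    have hQc : N - A.card = Q.card := by omega
    rw [hgs, hQc, ← hgapcard]
    exact hineq.trans (Nat.mul_le_mul_right _ hFle)

/-! ### Cyclic arrangements of rooted bags -/

/-- `w 0, …, w (N - 1)` is a cyclic listing of distinct vertices, split into bags, each of which
starts with its root; the roots are the listed vertices in `A`. An edge of `G` between listed
vertices either stays inside a bag (no root after its first end up to its second end) or joins the
roots of two cyclically consecutive bags. The values of `w` from `N` on are irrelevant. -/
structure IsArrangement {V : Type*} (G : SimpleGraph V) (A : Finset V) (w : ℕ → V) (N : ℕ) :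
    Prop where
  pos : 0 < N
  root_zero : w 0 ∈ A
  inj : ∀ p < N, ∀ q < N, w p = w q → p = q
  edge : ∀ p q, p < q → q < N → G.Adj (w p) (w q) →
    (∀ z, p < z → z ≤ q → w z ∉ A) ∨
    (w p ∈ A ∧ w q ∈ A ∧ ((∀ z, p < z → z < q → w z ∉ A) ∨
      (p = 0 ∧ ∀ z, q < z → z < N → w z ∉ A)))

namespace IsArrangement

variable {V : Type*} {G : SimpleGraph V} {A : Finset V} {w : ℕ → V} {N : ℕ}

theorem truncate (hw : IsArrangement G A w N) {y : ℕ} (hy : y < N) :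
    IsArrangement G A w (y + 1) where
  pos := by omega
  root_zero := hw.root_zero
  inj := fun p hp q hq => hw.inj p (by omega) q (by omega)
  edge := by
    intro p q hpq hq hadj
    rcases hw.edge p q hpq (by omega) hadj with h | ⟨h1, h2, h | ⟨h3, h⟩⟩
    · exact Or.inl h
    · exact Or.inr ⟨h1, h2, Or.inl h⟩
    · exact Or.inr ⟨h1, h2, Or.inr ⟨h3, fun z hz1 hz2 => h z hz1 (by omega)⟩⟩

theorem rotate (hw : IsArrangement G A w N) {x : ℕ} (hx : x < N) (hxA : w x ∈ A) :
    IsArrangement G A (fun p => w ((x + p) % N)) N where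
  pos := hw.pos
  root_zero := by simpa [Nat.mod_eq_of_lt hx] using hxA
  inj := by
    intro p hp q hq h
    have := hw.inj _ (Nat.mod_lt _ hw.pos) _ (Nat.mod_lt _ hw.pos) h
    rcases mod_cases (a := x + p) (N := N) (by omega) with ⟨a1, a2⟩ | ⟨a1, a2⟩ <;>
    rcases mod_cases (a := x + q) (N := N) (by omega) with ⟨b1, b2⟩ | ⟨b1, b2⟩ <;> omega
  edge := by
    intro p q hpq hq hadj
    have h0 := hw.root_zero
    rcases mod_cases (a := x + p) (N := N) (by omega) with ⟨a1, a2⟩ | ⟨a1, a2⟩ <;>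
    rcases mod_cases (a := x + q) (N := N) (by omega) with ⟨b1, b2⟩ | ⟨b1, b2⟩
    · simp only [a2, b2] at hadj ⊢
      have hz : ∀ z, z ≤ q → (x + z) % N = x + z := fun z hz => Nat.mod_eq_of_lt (by omega)
      rcases hw.edge _ _ (by omega) b1 hadj with h | ⟨h1, h2, h | ⟨h3, h⟩⟩
      · exact Or.inl fun z hz1 hz2 => by rw [hz z hz2]; exact h _ (by omega) (by omega)
      · exact Or.inr ⟨h1, h2, Or.inl fun z hz1 hz2 => by
          rw [hz z hz2.le]; exact h _ (by omega) (by omega)⟩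
      · refine Or.inr ⟨h1, h2, Or.inr ⟨by omega, fun z hz1 hz2 => ?_⟩⟩
        rw [Nat.mod_eq_of_lt (by omega)]
        exact h _ (by omega) (by omega)
    · simp only [a2, b2] at hadj ⊢
      rcases hw.edge _ _ (by omega) a1 hadj.symm with h | ⟨h1, h2, h | ⟨h3, h⟩⟩
      · exact absurd hxA (h x (by omega) (by omega))
      · have hp : p = 0 := by
          by_contra hp
          exact h x (by omega) (by omega) hxA
        refine Or.inr ⟨h2, h1, Or.inr ⟨hp, fun z hz1 hz2 => ?_⟩⟩
        rcases mod_cases (a := x + z) (N := N) (by omega) with ⟨c1, c2⟩ | ⟨c1, c2⟩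
        · omega
        · rw [c2]; exact h _ (by omega) (by omega)
      · refine Or.inr ⟨h2, h1, Or.inl fun z hz1 hz2 => ?_⟩
        rw [Nat.mod_eq_of_lt (by omega)]
        exact h _ (by omega) (by omega)
    · omega
    · simp only [a2, b2] at hadj ⊢
      have hz : ∀ z, p ≤ z → z ≤ q → (x + z) % N = x + z - N := by
        intro z hz1 hz2
        rcases mod_cases (a := x + z) (N := N) (by omega) with ⟨c1, c2⟩ | ⟨c1, c2⟩ <;> omega
      rcases hw.edge _ _ (by omega) (by omega) hadj with h | ⟨h1, h2, h | ⟨h3, h⟩⟩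
      · exact Or.inl fun z hz1 hz2 => by
          rw [hz z hz1.le hz2]; exact h _ (by omega) (by omega)
      · exact Or.inr ⟨h1, h2, Or.inl fun z hz1 hz2 => by
          rw [hz z hz1.le hz2.le]; exact h _ (by omega) (by omega)⟩
      · exact absurd hxA (h x (by omega) hx)

theorem image_rotate (w : ℕ → V) {N x : ℕ} (hx : x < N) :
    (Finset.range N).image (fun p => w ((x + p) % N)) = (Finset.range N).image w := by
  ext v
  simp only [Finset.mem_image, Finset.mem_range]
  constructor
  · rintro ⟨p, hp, rfl⟩
    exact ⟨_, Nat.mod_lt _ (by omega), rfl⟩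
  · rintro ⟨p, hp, rfl⟩
    refine ⟨(p + N - x) % N, Nat.mod_lt _ (by omega), ?_⟩
    congr 1
    rw [Nat.add_mod_mod, show x + (p + N - x) = p + N by omega, Nat.add_mod_right,
      Nat.mod_eq_of_lt hp]

theorem card_image (hw : IsArrangement G A w N) {s : Finset ℕ} (hs : ∀ p ∈ s, p < N) :
    (s.image w).card = s.card :=
  Finset.card_image_of_injOn fun p hp q hq => hw.inj p (hs p hp) q (hs q hq)

theorem mem_image_iff (hw : IsArrangement G A w N) {s : Finset ℕ} (hs : ∀ p ∈ s, p < N) {p : ℕ}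
    (hp : p < N) : w p ∈ s.image w ↔ p ∈ s := by
  constructor
  · intro h
    obtain ⟨q, hq, h⟩ := Finset.mem_image.mp h
    exact hw.inj q (hs q hq) p hp h ▸ hq
  · exact Finset.mem_image_of_mem w

end IsArrangement

/-! ### Cutting an arrangement -/

/-- The arithmetic of the induction step: with `k = N / L` and `k' = h / a ≤ k - 1`, the cost
`8 k' + 2 g / h + 3` of one step stays below `8 k`, because `k - k' ≥ 1 + (g - h) / a ≥ g / h`. -/
theorem cover_bound {D S L N a h g : ℕ} (hD : D * a ≤ 8 * h) (hS : S * h ≤ 2 * g)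
    (hg : L * g ≤ a * (N - L)) (ha : 0 < a) (hah : a ≤ h) (hhg : h ≤ g) (hLN : L ≤ N) :
    (D + S + 3) * L ≤ 8 * N := by
  obtain ⟨M, rfl⟩ := Nat.exists_eq_add_of_le hLN
  rw [Nat.add_sub_cancel_left] at hg
  have hh : 0 < h := by omega
  -- the inequality `8 k' + 2 g / h + 3 ≤ 8 (1 + g / a)`, multiplied by `a * h`
  have key : (D + S + 3) * (a * h) ≤ 8 * (a * h) + 8 * (g * h) := by
    have h1 : D * a * h ≤ 8 * h * h := Nat.mul_le_mul_right _ hD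
    have h2 : S * h * a ≤ 2 * g * a := Nat.mul_le_mul_right _ hS
    obtain ⟨t, rfl⟩ := Nat.exists_eq_add_of_le hhg
    obtain ⟨s, rfl⟩ := Nat.exists_eq_add_of_le hah
    nlinarith [Nat.zero_le (t * s), Nat.zero_le (a * s), Nat.zero_le (a * t),
      Nat.zero_le (s * s)]
  have h3 : (D + S + 3) * L * (a * h) ≤ 8 * (L + M) * (a * h) := by
    calc (D + S + 3) * L * (a * h) = (D + S + 3) * (a * h) * L := by ring
      _ ≤ (8 * (a * h) + 8 * (g * h)) * L := Nat.mul_le_mul_right _ key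
      _ = 8 * L * (a * h) + 8 * h * (L * g) := by ring
      _ ≤ 8 * L * (a * h) + 8 * h * (a * M) := by gcongr
      _ = 8 * (L + M) * (a * h) := by ring
  exact Nat.le_of_mul_le_mul_right h3 (Nat.mul_pos ha hh)

/-- An arrangement of `N` vertices with `L` roots can be cut into parts of any prescribed sizes `m`
and `N - m` such that the cut edges are covered by a set `D` of at most `8 N / L` vertices. -/
theorem exists_cut {V : Type*} (G : SimpleGraph V) (hG : G.IsAcyclic) (A : Finset V) :
    ∀ (N : ℕ) (w : ℕ → V), IsArrangement G A w N → ∀ m ≤ N,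
    ∃ B D : Finset V, B ⊆ (Finset.range N).image w ∧ B.card = m ∧
      D.card * ((Finset.range N).filter (fun p => w p ∈ A)).card ≤ 8 * N ∧
      ∀ a ∈ B, ∀ b ∈ (Finset.range N).image w \ B, G.Adj a b → a ∈ D ∨ b ∈ D := by
  intro N
  induction N using Nat.strong_induction_on with
  | _ N ih =>
  intro w₀ hw₀ m hm
  rcases Nat.eq_zero_or_pos m with rfl | hm0
  · exact ⟨∅, ∅, by simp, by simp, by simp, by simp⟩
  rcases Nat.eq_or_lt_of_le hm with rfl | hmN
  · refine ⟨(Finset.range m).image w₀, ∅, subset_rfl, ?_, by simp, by simp⟩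
    rw [hw₀.card_image (by simp), Finset.card_range]
  obtain ⟨x, hx, hxA, hcase⟩ := exists_gap N m (fun p => w₀ p ∈ A) hw₀.root_zero hm0 hmN
  set L := ((Finset.range N).filter (fun p => w₀ p ∈ A)).card with hL
  have hLN : L ≤ N := by simpa using Finset.card_filter_le (Finset.range N) (fun p => w₀ p ∈ A)
  have hw := hw₀.rotate hx hxA
  rw [← IsArrangement.image_rotate w₀ hx]
  set w : ℕ → V := fun p => w₀ ((x + p) % N) with hwdef
  rcases hcase with hmA | ⟨y, c, e, hyc, hcm, hye, heN, hyA, hcA, heA, hgap, hineq⟩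
  · -- cut the cyclic order at two roots
    have hmA' : w m ∈ A := hmA
    have hs : ∀ p ∈ Finset.range m, p < N := fun p hp => (Finset.mem_range.mp hp).trans hmN
    refine ⟨(Finset.range m).image w, {w 0, w m},
      Finset.image_subset_image (Finset.range_subset_range.mpr hm), ?_, ?_, ?_⟩
    · rw [hw.card_image hs, Finset.card_range]
    · have := Finset.card_le_two (a := w 0) (b := w m)
      calc _ ≤ 2 * L := Nat.mul_le_mul_right _ this
        _ ≤ 8 * N := by omega
    · intro a ha b hb hab
      obtain ⟨p, hp, rfl⟩ := Finset.mem_image.mp ha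
      obtain ⟨hb1, hb2⟩ := Finset.mem_sdiff.mp hb
      obtain ⟨q, hq, rfl⟩ := Finset.mem_image.mp hb1
      rw [hw.mem_image_iff hs (Finset.mem_range.mp hq)] at hb2
      rw [Finset.mem_range] at hp hq hb2
      rcases hw.edge p q (by omega) hq hab with h | ⟨-, -, h | ⟨rfl, -⟩⟩
      · exact absurd hmA' (h m hp (by omega))
      · have : q = m := by
          by_contra hne
          exact h m hp (by omega) hmA'
        subst this; simp
      · simp
  · have hyA' : w y ∈ A := hyA
    have hcA' : w c ∈ A := hcA
    have heA' : e = N ∨ w e ∈ A := heA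
    have hgap' : ∀ z, c < z → z < e → w z ∉ A := hgap
    -- The middle segment `(y, c]` goes to `B`; the missing `m + y - c` vertices are taken from the
    -- gap `(c, e)`, up to an error of at most `y + 1`.
    set Y := (Finset.Ioo c e).image w with hY
    have hYs : ∀ p ∈ Finset.Ioo c e, p < N := by
      intro p hp; have := Finset.mem_Ioo.mp hp; omega
    have hYc : Y.card = e - c - 1 := by rw [hY, hw.card_image hYs, Nat.card_Ioo]
    obtain ⟨U, S, hUY, hUq, hqU, hSc, hUS⟩ :=
      exists_approx G hG (y + 1) (by omega) (m + y - c) Y (by omega)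
    -- the error is corrected by induction inside the initial segment `[0, y]`
    obtain ⟨R, D, hRI, hRc, hDc, hRD⟩ := ih (y + 1) (by omega) w (hw.truncate (by omega))
      (m + y - c - U.card) (by omega)
    set a := ((Finset.range (y + 1)).filter (fun p => w p ∈ A)).card with ha
    have hineq' : L * (e - c - 1) ≤ a * (N - L) := by convert hineq
    have hapos : 0 < a := Finset.card_pos.mpr
      ⟨0, Finset.mem_filter.mpr ⟨by simp, hw.root_zero⟩⟩
    have hale : a ≤ y + 1 := by
      simpa using Finset.card_filter_le (Finset.range (y + 1)) (fun p => w p ∈ A)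
    have hRs : ∀ p ∈ Finset.range (y + 1), p < N := by
      intro p hp; have := Finset.mem_range.mp hp; omega
    have hTs : ∀ p ∈ Finset.Ioc y c, p < N := by
      intro p hp; have := Finset.mem_Ioc.mp hp; omega
    have hRmem : ∀ p < N, w p ∈ R → p ≤ y := by
      intro p hp h
      have := (hw.mem_image_iff hRs hp).mp (hRI h)
      rw [Finset.mem_range] at this; omega
    have hUmem : ∀ p < N, w p ∈ U → c < p ∧ p < e := by
      intro p hp h
      exact Finset.mem_Ioo.mp ((hw.mem_image_iff hYs hp).mp (hUY h))
    have hTmem : ∀ p < N, (w p ∈ (Finset.Ioc y c).image w ↔ y < p ∧ p ≤ c) := by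
      intro p hp
      rw [hw.mem_image_iff hTs hp, Finset.mem_Ioc]
    refine ⟨R ∪ (Finset.Ioc y c).image w ∪ U, D ∪ S ∪ {w 0, w y, w c}, ?_, ?_, ?_, ?_⟩
    · refine Finset.union_subset (Finset.union_subset (hRI.trans ?_) ?_) (hUY.trans ?_) <;>
      apply Finset.image_subset_image <;> intro p hp <;> rw [Finset.mem_range]
      exacts [hRs p hp, hTs p hp, hYs p hp]
    · rw [Finset.card_union_of_disjoint, Finset.card_union_of_disjoint, hw.card_image hTs,
        Nat.card_Ioc, hRc]
      · omega
      · rw [Finset.disjoint_left]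
        intro v hv hv'
        obtain ⟨p, hp, rfl⟩ := Finset.mem_image.mp (hRI hv)
        have h1 := (hTmem p (hRs p hp)).mp hv'
        rw [Finset.mem_range] at hp
        omega
      · rw [Finset.disjoint_left]
        intro v hv hv'
        obtain ⟨p, hp, rfl⟩ := Finset.mem_image.mp (hUY hv')
        rw [Finset.mem_union, hTmem p (hYs p hp)] at hv
        rw [Finset.mem_Ioo] at hp
        rcases hv with hv | hv
        · have := hRmem p (by omega) hv; omega
        · omega
    · have h1 := Finset.card_union_le (D ∪ S) {w 0, w y, w c}
      have h2 := Finset.card_union_le D S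
      have h3 := Finset.card_le_three (a := w 0) (b := w y) (c := w c)
      calc _ ≤ (D.card + S.card + 3) * L := Nat.mul_le_mul_right _ (by omega)
        _ ≤ 8 * N := cover_bound (g := e - c - 1) hDc (hSc.trans (by omega)) hineq' hapos hale
            (by omega) hLN
    · -- a symmetric statement about positions `p < q` on different sides
      set B := R ∪ (Finset.Ioc y c).image w ∪ U with hB
      have hBmem : ∀ p, w p ∈ B ↔ w p ∈ R ∨ w p ∈ (Finset.Ioc y c).image w ∨ w p ∈ U := by
        intro p; simp only [hB, Finset.mem_union, or_assoc]
      have key : ∀ p q, p < q → q < N → G.Adj (w p) (w q) → ¬ (w p ∈ B ↔ w q ∈ B) →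
          w p ∈ D ∪ S ∪ {w 0, w y, w c} ∨ w q ∈ D ∪ S ∪ {w 0, w y, w c} := by
        intro p q hpq hq hadj hne
        have hpN : p < N := hpq.trans hq
        have hE := hw.edge p q hpq hq hadj
        by_cases hp0 : p = 0
        · subst hp0; simp
        by_cases hpy : p = y
        · subst hpy; simp
        by_cases hpc : p = c
        · subst hpc; simp
        -- a root strictly between the ends of an edge would separate them
        have hsep : ∀ z, p < z → z < q → w z ∈ A → False := by
          intro z h1 h2 h3
          rcases hE with h | ⟨-, -, h | ⟨h, -⟩⟩
          · exact h z h1 h2.le h3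
          · exact h z h1 h2 h3
          · exact hp0 h
        have hend : w q ∈ A → w p ∈ A := by
          intro h3
          rcases hE with h | ⟨h, -⟩
          · exact absurd h3 (h q hpq le_rfl)
          · exact h
        rw [hBmem, hBmem, hTmem p hpN, hTmem q hq] at hne
        have hRp := hRmem p hpN
        have hRq := hRmem q hq
        have hUp := hUmem p hpN
        have hUq' := hUmem q hq
        rcases lt_or_gt_of_ne hpy with h1 | h1
        · -- `p` lies in the initial segment, hence so does `q`
          have hqy : q ≤ y := by
            by_contra! hcon
            exact hsep y h1 hcon hyA'
          have hq' : w q ∈ (Finset.range (y + 1)).image w :=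
            Finset.mem_image_of_mem w (Finset.mem_range.mpr (by omega))
          have hp' : w p ∈ (Finset.range (y + 1)).image w :=
            Finset.mem_image_of_mem w (Finset.mem_range.mpr (by omega))
          have hD : w p ∈ D ∨ w q ∈ D := by
            by_cases hpR : w p ∈ R
            · refine hRD _ hpR _ (Finset.mem_sdiff.mpr ⟨hq', fun hqR => hne ?_⟩) hadj
              simp [hpR, hqR]
            · by_cases hqR : w q ∈ R
              · exact (hRD _ hqR _ (Finset.mem_sdiff.mpr ⟨hp', hpR⟩) hadj.symm).symm
              · exfalso; apply hne
                constructor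
                · rintro (h | h | h)
                  · exact absurd h hpR
                  · omega
                  · have := hUp h; omega
                · rintro (h | h | h)
                  · exact absurd h hqR
                  · omega
                  · have := hUq' h; omega
          rcases hD with h | h
          · left; simp [h]
          · right; simp [h]
        rcases lt_or_gt_of_ne hpc with h2 | h2
        · -- `p` lies in the middle segment, hence so does `q`
          have hqc : q ≤ c := by
            by_contra! hcon
            exact hsep c h2 hcon hcA'
          exact absurd ⟨fun _ => Or.inr (Or.inl ⟨by omega, hqc⟩),
            fun _ => Or.inr (Or.inl ⟨h1, h2.le⟩)⟩ hne
        · by_cases h3 : p < e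
          · -- `p` lies in the gap, hence so does `q`
            have hqe : q < e := by
              by_contra! hcon
              rcases heA' with h | h
              · omega
              · rcases Nat.eq_or_lt_of_le hcon with rfl | h4
                · exact hgap' p h2 h3 (hend h)
                · exact hsep e h3 h4 h
            have hpY : w p ∈ Y := Finset.mem_image_of_mem w (Finset.mem_Ioo.mpr ⟨h2, h3⟩)
            have hqY : w q ∈ Y := Finset.mem_image_of_mem w (Finset.mem_Ioo.mpr ⟨by omega, hqe⟩)
            have hS' : w p ∈ S ∨ w q ∈ S := by
              by_cases hpU : w p ∈ U
              · refine hUS _ hpU _ (Finset.mem_sdiff.mpr ⟨hqY, fun hqU' => hne ?_⟩) hadj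
                simp [hpU, hqU']
              · by_cases hqU' : w q ∈ U
                · exact (hUS _ hqU' _ (Finset.mem_sdiff.mpr ⟨hpY, hpU⟩) hadj.symm).symm
                · exfalso; apply hne
                  constructor
                  · rintro (h | h | h)
                    · have := hRp h; omega
                    · omega
                    · exact absurd h hpU
                  · rintro (h | h | h)
                    · have := hRq h; omega
                    · omega
                    · exact absurd h hqU'
            rcases hS' with h | h
            · left; simp [h]
            · right; simp [h]
          · exfalso; apply hne
            constructor
            · rintro (h | h | h)
              · have := hRp h; omega
              · omega
              · have := hUp h; omega
            · rintro (h | h | h)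
              · have := hRq h; omega
              · omega
              · have := hUq' h; omega
      intro u hu v hv huv
      obtain ⟨hv1, hvB⟩ := Finset.mem_sdiff.mp hv
      have hu1 : u ∈ (Finset.range N).image w := by
        simp only [hB, Finset.mem_union] at hu
        rcases hu with (h | h) | h
        · exact Finset.image_subset_image (fun p hp => Finset.mem_range.mpr (hRs p hp)) (hRI h)
        · exact Finset.image_subset_image (fun p hp => Finset.mem_range.mpr (hTs p hp)) h
        · exact Finset.image_subset_image (fun p hp => Finset.mem_range.mpr (hYs p hp)) (hUY h)
      obtain ⟨p, hp, rfl⟩ := Finset.mem_image.mp hu1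
      obtain ⟨q, hq, rfl⟩ := Finset.mem_image.mp hv1
      rw [Finset.mem_range] at hp hq
      rcases lt_trichotomy p q with h | h | h
      · exact key p q h hq huv fun h' => hvB (h'.mp hu)
      · subst h; exact absurd hu hvB
      · exact (key q p h hp huv.symm fun h' => hvB (h'.mpr hu)).symm

/-! ### From a tree with a path to an arrangement -/

/-- Deleting the edges of a path `v 0, …, v (L - 1)` from a tree leaves one component per path
vertex; `f z` is the index of the path vertex in the component of `z`. -/
theorem exists_bags {V : Type*} (G : SimpleGraph V) (hT : G.IsTree) (L : ℕ) (hL : 0 < L)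
    (v : ℕ → V) (hinj : ∀ i < L, ∀ j < L, v i = v j → i = j)
    (hadj : ∀ i, i + 1 < L → G.Adj (v i) (v (i + 1))) :
    ∃ f : V → ℕ, (∀ i < L, f (v i) = i) ∧ (∀ z, f z < L) ∧
      ∀ a b, G.Adj a b → f a = f b ∨ ∃ i, i + 1 < L ∧ s(a, b) = s(v i, v (i + 1)) := by
  let H := G.deleteEdges {e | ∃ i, i + 1 < L ∧ e = s(v i, v (i + 1))}
  have hH : ∀ a b, G.Adj a b → H.Adj a b ∨ ∃ i, i + 1 < L ∧ s(a, b) = s(v i, v (i + 1)) := by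
    intro a b hab
    by_cases h : ∃ i, i + 1 < L ∧ s(a, b) = s(v i, v (i + 1))
    · exact Or.inr h
    · exact Or.inl (SimpleGraph.deleteEdges_adj.mpr ⟨hab, h⟩)
  have hex : ∀ z, ∃ i < L, H.Reachable z (v i) := by
    intro z
    obtain ⟨p⟩ := hT.connected.preconnected z (v 0)
    generalize hu : v 0 = u at p
    induction p with
    | nil => exact ⟨0, hL, hu ▸ SimpleGraph.Reachable.refl _⟩
    | @cons a b c hab p ih =>
      rcases hH a b hab with h | ⟨i, hi, h⟩
      · obtain ⟨i, hi, hr⟩ := ih hu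
        exact ⟨i, hi, h.reachable.trans hr⟩
      · rcases Sym2.eq_iff.mp h with ⟨rfl, -⟩ | ⟨rfl, -⟩
        · exact ⟨i, by omega, SimpleGraph.Reachable.refl _⟩
        · exact ⟨i + 1, hi, SimpleGraph.Reachable.refl _⟩
  have huniq : ∀ i j, i < j → j < L → ¬ H.Reachable (v i) (v j) := by
    intro i j hij hj hr
    have hbr := SimpleGraph.isAcyclic_iff_forall_adj_isBridge.mp hT.isAcyclic
      (hadj i (by omega))
    rw [SimpleGraph.isBridge_iff] at hbr
    apply hbr
    have hle : H ≤ G.deleteEdges {s(v i, v (i + 1))} :=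
      SimpleGraph.deleteEdges_anti (Set.singleton_subset_iff.mpr ⟨i, by omega, rfl⟩)
    refine (hr.mono hle).trans ?_
    -- the rest of the path joins `v (i + 1)` to `v j`
    have hpath : ∀ k, i + 1 + k < L →
        (G.deleteEdges {s(v i, v (i + 1))}).Reachable (v (i + 1 + k)) (v (i + 1)) := by
      intro k
      induction k with
      | zero => intro _; exact SimpleGraph.Reachable.refl _
      | succ k ih =>
        intro hk
        refine SimpleGraph.Reachable.trans (SimpleGraph.Adj.reachable ?_) (ih (by omega))
        rw [SimpleGraph.deleteEdges_adj]
        refine ⟨(hadj (i + 1 + k) hk).symm, ?_⟩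
        rw [Set.mem_singleton_iff, Sym2.eq_iff]
        rintro (⟨h, -⟩ | ⟨h, h'⟩)
        · have := hinj _ hk _ (by omega) h; omega
        · have := hinj _ (by omega) _ (by omega) h'; omega
    have := hpath (j - (i + 1)) (by omega)
    rwa [show i + 1 + (j - (i + 1)) = j by omega] at this
  have huniq' : ∀ i < L, ∀ j < L, H.Reachable (v i) (v j) → i = j := by
    intro i hi j hj hr
    rcases lt_trichotomy i j with h | h | h
    · exact absurd hr (huniq i j h hj)
    · exact h
    · exact absurd hr.symm (huniq j i h hi)
  choose f hfL hf using hex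
  refine ⟨f, fun i hi => (huniq' _ hi _ (hfL _) (hf _)).symm, hfL, fun a b hab => ?_⟩
  rcases hH a b hab with h | h
  · exact Or.inl (huniq' _ (hfL _) _ (hfL _) ((hf a).symm.trans (h.reachable.trans (hf b))))
  · exact Or.inr h

/-- The vertices can be listed in nondecreasing order of a key `k`. The vertex `v₀` is a default
value for positions past the end of the list. -/
theorem exists_sorted {V : Type*} [Fintype V] (k : V → ℕ) (v₀ : V) :
    ∃ w : ℕ → V, (∀ p < Fintype.card V, ∀ q < Fintype.card V, w p = w q → p = q) ∧
      (∀ z, ∃ p < Fintype.card V, w p = z) ∧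
      ∀ p q, p ≤ q → q < Fintype.card V → k (w p) ≤ k (w q) := by
  let e := (Fintype.equivFin V).symm
  let σ := Tuple.sort (k ∘ e)
  have hmono := Tuple.monotone_sort (k ∘ e)
  refine ⟨fun p => if hp : p < Fintype.card V then e (σ ⟨p, hp⟩) else v₀, ?_, ?_, ?_⟩
  · intro p hp q hq h
    simp only [hp, hq, dif_pos] at h
    simpa using σ.injective (e.injective h)
  · intro z
    refine ⟨σ.symm (e.symm z), Fin.is_lt _, ?_⟩
    simp
  · intro p q hpq hq
    have hp : p < Fintype.card V := by omega
    simp only [hp, hq, dif_pos]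
    exact hmono (show (⟨p, hp⟩ : Fin _) ≤ ⟨q, hq⟩ from hpq)

theorem exists_arrangement {V : Type*} [Fintype V] (G : SimpleGraph V) (hT : G.IsTree)
    (L : ℕ) (hL : 0 < L) (v : ℕ → V) (hinj : ∀ i < L, ∀ j < L, v i = v j → i = j)
    (hadj : ∀ i, i + 1 < L → G.Adj (v i) (v (i + 1))) :
    ∃ w : ℕ → V, IsArrangement G ((Finset.range L).image v) w (Fintype.card V) ∧
      (Finset.range (Fintype.card V)).image w = Finset.univ := by
  obtain ⟨f, hfv, hfL, hfadj⟩ := exists_bags G hT L hL v hinj hadj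
  -- bags in order, and the root of each bag first
  obtain ⟨w, hwinj, hwsurj, hwmono⟩ :=
    exists_sorted (fun z => 2 * f z + if z = v (f z) then 0 else 1) (v 0)
  have hA : ∀ z, z ∈ (Finset.range L).image v ↔ z = v (f z) := by
    intro z
    rw [Finset.mem_image]
    constructor
    · rintro ⟨i, hi, rfl⟩
      rw [hfv i (Finset.mem_range.mp hi)]
    · intro h
      exact ⟨f z, Finset.mem_range.mpr (hfL z), h.symm⟩
  have hfmono : ∀ p q, p ≤ q → q < Fintype.card V → f (w p) ≤ f (w q) ∧
      (f (w p) = f (w q) → w q = v (f (w q)) → w p = v (f (w p))) := by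
    intro p q hpq hq
    have := hwmono p q hpq hq
    split_ifs at this with h1 h2 h2
    · exact ⟨by omega, fun _ _ => h1⟩
    · exact ⟨by omega, fun _ _ => h1⟩
    · exact ⟨by omega, fun _ _ => by omega⟩
    · exact ⟨by omega, fun _ h => absurd h h2⟩
  refine ⟨w, ⟨Fintype.card_pos_iff.mpr ⟨v 0⟩, ?_, hwinj, ?_⟩, ?_⟩
  · obtain ⟨p, hp, hwp⟩ := hwsurj (v 0)
    have h0 : f (w p) = 0 := by rw [hwp]; exact hfv 0 hL
    obtain ⟨h1, h2⟩ := hfmono 0 p (Nat.zero_le _) hp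
    rw [hA]
    exact h2 (by omega) (by rw [h0, hwp])
  · intro p q hpq hq hpqadj
    rcases hfadj _ _ hpqadj with h | ⟨i, hi, h⟩
    · left
      intro z hz1 hz2 hzA
      rw [hA] at hzA
      obtain ⟨h1, h2⟩ := hfmono p z hz1.le (by omega)
      obtain ⟨h3, -⟩ := hfmono z q hz2 hq
      have h4 : f (w p) = f (w z) := by omega
      have h5 := h2 h4 hzA
      rw [h4, ← hzA] at h5
      have := hwinj _ (by omega) _ (by omega) h5
      omega
    · right
      have hlt := (hfmono p q hpq.le hq).1
      have h1 := hfv i (by omega)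
      have h2 := hfv (i + 1) hi
      rcases Sym2.eq_iff.mp h with ⟨hp, hq'⟩ | ⟨hp, hq'⟩
      · refine ⟨?_, ?_, Or.inl ?_⟩
        · rw [hp]; exact Finset.mem_image_of_mem v (Finset.mem_range.mpr (by omega))
        · rw [hq']; exact Finset.mem_image_of_mem v (Finset.mem_range.mpr hi)
        · intro z hz1 hz2 hzA
          rw [hA] at hzA
          have h3 := (hfmono p z hz1.le (by omega)).1
          have h4 := (hfmono z q hz2.le hq).1
          rw [hp, h1] at h3
          rw [hq', h2] at h4
          rcases (show f (w z) = i ∨ f (w z) = i + 1 by omega) with h5 | h5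
          · rw [h5, ← hp] at hzA
            have := hwinj _ (by omega) _ (by omega) hzA
            omega
          · rw [h5, ← hq'] at hzA
            have := hwinj _ (by omega) _ (by omega) hzA
            omega
      · rw [hp, hq', h1, h2] at hlt
        omega
  · rw [Finset.eq_univ_iff_forall]
    intro z
    obtain ⟨p, hp, rfl⟩ := hwsurj z
    exact Finset.mem_image_of_mem w (Finset.mem_range.mpr hp)

/-! ### The bisection width -/

theorem cutWidth_le {V : Type*} [Fintype V] (G : SimpleGraph V) (B D : Finset V)
    (hD : ∀ a ∈ B, ∀ b ∉ B, G.Adj a b → a ∈ D ∨ b ∈ D) :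
    cutWidth G B ≤ D.card * maxDeg G := by
  have hsub : {e : Sym2 V | ∃ x y, G.Adj x y ∧ x ∈ B ∧ y ∉ B ∧ e = s(x, y)} ⊆
      ((D.biUnion fun d => (Finset.univ.filter (G.Adj d)).image fun u => s(d, u)) :
        Finset (Sym2 V)) := by
    rintro e ⟨x, y, hxy, hx, hy, rfl⟩
    simp only [Finset.coe_biUnion, Set.mem_iUnion, Finset.mem_coe, Finset.mem_image,
      Finset.mem_filter, Finset.mem_univ, true_and]
    rcases hD x hx y hy hxy with h | h
    · exact ⟨x, h, y, hxy, rfl⟩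
    · exact ⟨y, h, x, hxy.symm, Sym2.eq_swap⟩
  have h1 : cutWidth G B ≤
      (D.biUnion fun d => (Finset.univ.filter (G.Adj d)).image fun u => s(d, u)).card := by
    have := Set.ncard_le_ncard hsub (Finset.finite_toSet _)
    rwa [Set.ncard_coe_finset] at this
  refine h1.trans (Finset.card_biUnion_le_card_mul _ _ _ fun d _ => Finset.card_image_le.trans ?_)
  have h2 : (Finset.univ.filter (G.Adj d)).card = Nat.card {u // G.Adj d u} := by
    rw [Nat.card_eq_fintype_card, Fintype.card_subtype]
  rw [h2]
  exact Finset.le_sup (f := fun v => Nat.card {u // G.Adj v u}) (Finset.mem_univ d)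

end MinBisection

/-- Every tree `T` on `n` vertices with maximum degree `Δ` satisfies
`MinBis(T) ≤ 8 Δ / diam*(T)`. -/
theorem MinBisection.minBis_le_of_isTree {V : Type*} [Fintype V] (G : SimpleGraph V)
    (hT : G.IsTree) :
    (minBis G : ℝ) ≤ 8 * (maxDeg G : ℝ) / diamStar G := by
  obtain ⟨v₀⟩ := hT.connected.nonempty
  obtain ⟨u, v, P, hP, hPL⟩ : longestPathCard G ∈
      {k | ∃ (u v : V) (p : G.Walk u v), p.IsPath ∧ k = p.support.length} := by
    apply Nat.sSup_mem
    · exact ⟨1, v₀, v₀, SimpleGraph.Walk.nil, by simp, by simp⟩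
    · refine ⟨Fintype.card V, ?_⟩
      rintro k ⟨u, v, p, hp, rfl⟩
      exact hp.support_nodup.length_le_card
  rw [SimpleGraph.Walk.length_support] at hPL
  set L := longestPathCard G with hL
  have hinj : ∀ i < L, ∀ j < L, P.getVert i = P.getVert j → i = j := fun i hi j hj h =>
    hP.getVert_injOn (show i ≤ P.length by omega) (show j ≤ P.length by omega) h
  obtain ⟨w, hw, himg⟩ := exists_arrangement G hT L (by omega) P.getVert hinj
    (fun i hi => P.adj_getVert_succ (by omega))
  set n := Fintype.card V with hn
  obtain ⟨B, D, -, hBc, hDc, hBD⟩ := exists_cut G hT.isAcyclic _ n w hw (n / 2) (by omega)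
  have hroots : ((Finset.range n).filter
      (fun p => w p ∈ (Finset.range L).image P.getVert)).card = L := by
    rw [← hw.card_image (s := (Finset.range n).filter _)
      (fun p hp => Finset.mem_range.mp (Finset.mem_filter.mp hp).1)]
    refine Eq.trans ?_ ((Finset.card_image_of_injOn (f := P.getVert) (s := Finset.range L)
      (fun i hi j hj h => hinj i (by simpa using hi) j (by simpa using hj) h)).trans
        (Finset.card_range L))
    congr 1
    ext z
    have hz : z ∈ (Finset.range n).image w := himg ▸ Finset.mem_univ z
    constructor
    · intro h
      obtain ⟨p, hp, rfl⟩ := Finset.mem_image.mp h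
      simpa using (Finset.mem_filter.mp hp).2
    · intro h
      obtain ⟨p, hp, rfl⟩ := Finset.mem_image.mp hz
      exact Finset.mem_image_of_mem w (Finset.mem_filter.mpr ⟨hp, by simpa using h⟩)
  rw [hroots] at hDc
  have hbis : IsBisection B := by
    have := Finset.card_add_card_compl B
    unfold IsBisection
    omega
  have hwidth : cutWidth G B ≤ D.card * maxDeg G := by
    refine cutWidth_le G B D fun a ha b hb hab => hBD a ha b ?_ hab
    rw [himg]
    exact Finset.mem_sdiff.mpr ⟨Finset.mem_univ b, hb⟩
  have hmin : minBis G ≤ D.card * maxDeg G :=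
    (Nat.sInf_le ⟨B, hbis, rfl⟩ : minBis G ≤ cutWidth G B).trans hwidth
  have hnat : minBis G * L ≤ 8 * maxDeg G * n := by
    calc minBis G * L ≤ D.card * maxDeg G * L := Nat.mul_le_mul_right _ hmin
      _ = D.card * L * maxDeg G := by ring
      _ ≤ 8 * n * maxDeg G := Nat.mul_le_mul_right _ hDc
      _ = 8 * maxDeg G * n := by ring
  have hLpos : (0 : ℝ) < L := by exact_mod_cast (show 0 < L by omega)
  unfold diamStar
  rw [← hL, ← hn, div_div_eq_mul_div, le_div_iff₀ hLpos]
  exact_mod_cast hnat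
end

section
/- For every Δ ∈ ℕ and every c > 0, there is an α > 0 such that the following holds: if T is a tree on n ≥ 2 vertices with maximum degree at most Δ and MinBis(T) ≥ c·log₂ n, then T does not contain a path with α·n/log₂ n or more edges. -/
/-!
A tree on `n` vertices with maximum degree at most `Δ` that contains a path with `L` edges has a
bisection of width at most `(Δ + 5) n / (L + 1)` (`minBis_le`). If this width is at least
`c log₂ n`, then `L` is smaller than `α n / log₂ n` with `α = (Δ + 5) / c`.

To prove the bound, deleting the `k - 1` edges of the path, where `k = L + 1`, leaves `k` trees, one
at each path vertex. Arrange them around a circle of length `n`, each occupying an interval as long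
as its number of vertices. For every `m ≤ n` a set of `m` vertices is found at cost at most
`K n / k`, where `K = D + 4` and `D = Δ + 1` (`exists_solvable`). Suppose that the shift by `m` maps
no starting point of an interval to another one (otherwise the trees in between form a set of size
`m` at constant cost). Put `ρ = n / k - 1`. By averaging, some tree `T` of size `t` contains
`q + 1 ≥ 1` of the shifted starting points strictly inside its interval, where
`t - 1 ≤ ρ (q + 1)` (`exists_crossing`). Let `x₁ < x₂` be the first and the last of the
corresponding starting points, and let `o` be the position inside `T` of the shift of `x₁`.

* If `o ≤ ρ + 1`, take everything from `x₁` up to `T`, and `o` vertices of `T`. This costs at most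
  `D o + 4`.
* Otherwise `q ≥ 1` and `t - o ≤ ρ q + 1`. The stretch from `x₁` to `x₂` consists of `q` consecutive
  trees with `z ≤ ρ q` vertices in total. Take everything from `x₂` up to `T`, and a number of
  vertices of `T` in the window `[o, o + z]`, which is possible at cost `D (t - o) / (z + 1)` by
  cutting off subtrees of suitable sizes (`exists_window`). The number of vertices still missing
  is between `0` and `z`, and by induction they can be found in the `q` trees at cost `K z / q`.
  With `r = ρ q / z` the total is at most `K ρ / r + D r + 4 ≤ K (ρ + 1) = K n / k`
  (`step_ineq`), as `1 ≤ r ≤ ρ`.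

The recursion only needs the sizes of the trees and, for each tree, the cost of separating a given
number of its vertices; this is recorded in `TreeCycle`. In the tree itself, everything is expressed
by the parent function with respect to the first vertex of the path.
-/

open scoped Classical

namespace MinBisection

/-! ### Trees around a cycle, described by their sizes -/

/-- Data of `k` trees attached to the vertices of a cycle, in terms of sizes only: the `j`-th tree
has `s j` vertices, and `c j b` bounds the number of edges inside it that have to be cut in order
to separate `b` of its vertices from the others. Indices are natural numbers, and all data are
`k`-periodic. The last two fields say that the size may be chosen anywhere in a prescribed window
`[lo, hi]`, at a price of about `Δ` times the ratio between the number of vertices taken (or left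
out) and the length of the window. -/
structure TreeCycle (Δ k : ℕ) (s : ℕ → ℕ) (c : ℕ → ℕ → ℕ) : Prop where
  s_per : ∀ j, s (j + k) = s j
  c_per : ∀ j, c (j + k) = c j
  pos : ∀ j, 1 ≤ s j
  low : ∀ j lo hi, lo ≤ hi → hi ≤ s j →
    ∃ b, lo ≤ b ∧ b ≤ hi ∧ c j b * (hi - lo + 1) ≤ Δ * hi
  high : ∀ j lo hi, lo ≤ hi → hi ≤ s j →
    ∃ b, lo ≤ b ∧ b ≤ hi ∧ c j b * (hi - lo + 1) ≤ Δ * (s j - lo)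

/-- When `b j` vertices are taken from the `j`-th tree, the cycle edge between the trees `j` and
`j + 1` may be cut unless both trees are taken entirely or both are left out entirely. -/
def Bad (s b : ℕ → ℕ) (j : ℕ) : Prop :=
  ¬ ((b j = 0 ∧ b (j + 1) = 0) ∨ (b j = s j ∧ b (j + 1) = s (j + 1)))

/-- Upper bound for the number of edges cut when `b j` vertices are taken from the `j`-th tree. -/
noncomputable def cost (k : ℕ) (s : ℕ → ℕ) (c : ℕ → ℕ → ℕ) (b : ℕ → ℕ) : ℕ :=
  ∑ j ∈ Finset.range k, (c j (b j) + if Bad s b j then 1 else 0)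

/-- Exactly `m` vertices can be chosen at cost at most `X`. -/
def Solvable (k : ℕ) (s : ℕ → ℕ) (c : ℕ → ℕ → ℕ) (m X : ℕ) : Prop :=
  ∃ b : ℕ → ℕ, (∀ j, b (j + k) = b j) ∧ (∀ j, b j ≤ s j) ∧
    ∑ j ∈ Finset.range k, b j = m ∧ cost k s c b ≤ X

lemma sum_range_shift (k : ℕ) (f : ℕ → ℕ) (hf : ∀ j, f (j + k) = f j) (r : ℕ) :
    ∑ j ∈ Finset.range k, f (j + r) = ∑ j ∈ Finset.range k, f j := by
  induction r with
  | zero => simp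
  | succ r ih =>
    rw [← ih]
    have h1 := Finset.sum_range_succ' (fun j => f (j + r)) k
    have h2 := Finset.sum_range_succ (fun j => f (j + r)) k
    have h3 : f (k + r) = f (0 + r) := by rw [add_comm k r, hf, zero_add]
    have h4 : ∀ j, f (j + (r + 1)) = f (j + 1 + r) := fun j => by congr 1; omega
    simp only [h4]
    omega

lemma per_mul {α : Type*} {k : ℕ} {f : ℕ → α} (hf : ∀ j, f (j + k) = f j) (j r : ℕ) :
    f (j + k * r) = f j := by
  induction r with
  | zero => simp
  | succ r ih => rw [Nat.mul_succ, ← add_assoc, hf, ih]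

lemma per_mod {α : Type*} {k : ℕ} {f : ℕ → α} (hf : ∀ j, f (j + k) = f j) (j : ℕ) :
    f (j % k) = f j := by
  conv_rhs => rw [← Nat.mod_add_div j k]
  exact (per_mul hf _ _).symm

lemma TreeCycle.shift {Δ k : ℕ} {s : ℕ → ℕ} {c : ℕ → ℕ → ℕ} (h : TreeCycle Δ k s c) (r : ℕ) :
    TreeCycle Δ k (fun j => s (j + r)) (fun j => c (j + r)) where
  s_per j := by rw [add_right_comm]; exact h.s_per _
  c_per j := by rw [add_right_comm]; exact h.c_per _
  pos j := h.pos _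
  low j := h.low _
  high j := h.high _

lemma TreeCycle.c_zero {Δ k : ℕ} {s : ℕ → ℕ} {c : ℕ → ℕ → ℕ} (h : TreeCycle Δ k s c) (j : ℕ) :
    c j 0 = 0 := by
  obtain ⟨b, h1, h2, h3⟩ := h.low j 0 0 le_rfl (by omega)
  obtain rfl : b = 0 := by omega
  simpa using h3

lemma TreeCycle.c_full {Δ k : ℕ} {s : ℕ → ℕ} {c : ℕ → ℕ → ℕ} (h : TreeCycle Δ k s c) (j : ℕ) :
    c j (s j) = 0 := by
  obtain ⟨b, h1, h2, h3⟩ := h.high j (s j) (s j) le_rfl le_rfl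
  obtain rfl : b = s j := by omega
  simpa using h3

lemma Solvable.unshift {Δ k : ℕ} {s : ℕ → ℕ} {c : ℕ → ℕ → ℕ} (hk : 1 ≤ k)
    (h : TreeCycle Δ k s c) {r m X : ℕ}
    (hs : Solvable k (fun j => s (j + r)) (fun j => c (j + r)) m X) : Solvable k s c m X := by
  obtain ⟨b, hb, hbs, hm, hX⟩ := hs
  obtain ⟨k, rfl⟩ : ∃ k', k = k' + 1 := ⟨k - 1, by omega⟩
  -- shifting by `r` and then by `r * k` amounts to shifting by a multiple of the period
  have hper : ∀ j, b (j + r + r * k) = b j := fun j => by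
    rw [show j + r + r * k = j + (k + 1) * r by ring, per_mul hb]
  have hbper : ∀ j, b (j + (k + 1) + r * k) = b (j + r * k) := fun j => by
    rw [add_right_comm, hb]
  refine ⟨fun j => b (j + r * k), hbper, fun j => ?_, ?_, ?_⟩
  · have : b (j + r * k) ≤ s (j + r * k + r) := hbs (j + r * k)
    rwa [show j + r * k + r = j + (k + 1) * r by ring, per_mul h.s_per] at this
  · rw [← hm, ← sum_range_shift (k + 1) (fun j => b (j + r * k)) hbper r]
    exact Finset.sum_congr rfl fun j _ => hper j
  · refine le_trans (le_of_eq ?_) hX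
    unfold cost
    rw [← sum_range_shift (k + 1) _ ?_ r]
    · refine Finset.sum_congr rfl fun j _ => ?_
      have hB : Bad s (fun j => b (j + r * k)) (j + r) ↔ Bad (fun j => s (j + r)) b j := by
        simp only [Bad, hper, show j + r + 1 = j + 1 + r by omega]
      rw [if_congr hB rfl rfl]; beta_reduce; rw [hper]
    · intro j
      have hB : Bad s (fun j => b (j + r * k)) (j + (k + 1)) ↔
          Bad s (fun j => b (j + r * k)) j := by
        simp only [Bad, show j + (k + 1) + 1 = j + 1 + (k + 1) by omega, hbper, h.s_per]
      rw [if_congr hB rfl rfl]; beta_reduce; rw [hbper, h.c_per]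

/-- A choice `bZ` for the first `q` trees is extended to the whole cycle: all vertices of the trees
with index in `[q, i)`, `β` vertices of the `i`-th tree, and no others. At most four cycle edges are
cut in addition to those between the first `q` trees. -/
lemma glue {Δ k : ℕ} {s : ℕ → ℕ} {c : ℕ → ℕ → ℕ} (h : TreeCycle Δ k s c) {q i β m X : ℕ}
    (hi : i < k) (hq : q ≤ i) (hβ : β ≤ s i) (bZ : ℕ → ℕ) (hbZ : ∀ j < q, bZ j ≤ s j)
    (hm : ∑ j ∈ Finset.range q, bZ j + ∑ j ∈ Finset.Ico q i, s j + β = m)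
    (hX : ∑ j ∈ Finset.range q, (c j (bZ j) + if j + 1 < q ∧ Bad s bZ j then 1 else 0) ≤ X) :
    Solvable k s c m (X + c i β + 4) := by
  set g : ℕ → ℕ := fun j => if j < q then bZ j else if j < i then s j else if j = i then β else 0
    with hg
  have hgs : ∀ j, g j ≤ s j := fun j => by
    simp only [hg]
    split_ifs with h1 h2 h3
    · exact hbZ j h1
    · exact le_rfl
    · exact h3 ▸ hβ
    · omega
  have hmod : ∀ j < k, g (j % k) = g j := fun j hj => by rw [Nat.mod_eq_of_lt hj]
  refine ⟨fun j => g (j % k), fun j => by simp, fun j => ?_, ?_, ?_⟩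
  · exact (hgs _).trans (per_mod h.s_per j).le
  · rw [Finset.sum_congr rfl (g := g) fun j hj => hmod j (Finset.mem_range.1 hj), ← hm,
      ← Finset.sum_range_add_sum_Ico g hi, Finset.sum_range_succ,
      ← Finset.sum_range_add_sum_Ico g hq]
    have e1 : ∑ j ∈ Finset.range q, g j = ∑ j ∈ Finset.range q, bZ j :=
      Finset.sum_congr rfl fun j hj => by simp [hg, Finset.mem_range.1 hj]
    have e2 : ∑ j ∈ Finset.Ico q i, g j = ∑ j ∈ Finset.Ico q i, s j :=
      Finset.sum_congr rfl fun j hj => by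
        have := Finset.mem_Ico.1 hj
        simp [hg, this.2, not_lt.2 this.1]
    have e3 : ∑ j ∈ Finset.Ico i.succ k, g j = 0 :=
      Finset.sum_eq_zero fun j hj => by
        have := Finset.mem_Ico.1 hj
        simp only [hg]
        rw [if_neg (by omega), if_neg (by omega), if_neg (by omega)]
    have e4 : g i = β := by
      simp only [hg]
      rw [if_neg (by omega), if_neg (by omega)]; simp
    omega
  · have key : ∀ j ∈ Finset.range k,
        (c j (g (j % k)) + if Bad s (fun j => g (j % k)) j then 1 else 0) ≤
        (if j < q then (c j (bZ j) + if j + 1 < q ∧ Bad s bZ j then 1 else 0) else 0)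
        + (if j = i then c i β else 0) + ((if j = q - 1 then 1 else 0) +
          (if j = i - 1 then 1 else 0) + (if j = i then 1 else 0)
          + (if j = k - 1 then 1 else 0)) := by
      intro j hj
      have hj := Finset.mem_range.1 hj
      rw [hmod j hj]
      have hc : c j (g j) = (if j < q then c j (bZ j) else 0) + (if j = i then c i β else 0) := by
        simp only [hg]
        split_ifs <;> first | omega | skip
        all_goals simp_all [h.c_zero, h.c_full]
      by_cases h4 : j = k - 1
      · rw [hc]; split_ifs <;> omega
      have hB : Bad s (fun j => g (j % k)) j ↔ Bad s g j := by
        simp only [Bad, hmod j hj, hmod (j + 1) (by omega)]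
      rw [hc]
      by_cases h1 : j + 1 < q
      · have : Bad s g j ↔ Bad s bZ j := by
          simp only [Bad, hg, h1, if_pos (show j < q by omega), if_true]
        rw [hB, this]
        simp only [h1, true_and]
        split_ifs <;> omega
      by_cases h2 : j = q - 1 ∨ j = i - 1 ∨ j = i
      · split_ifs <;> omega
      have : ¬ Bad s g j := by
        simp only [Bad, hg, not_not]
        by_cases h3 : j < i
        · right
          rw [if_neg (by omega), if_pos h3, if_neg h1, if_pos (by omega)]
          exact ⟨rfl, rfl⟩
        · left
          rw [if_neg (by omega), if_neg h3, if_neg (by omega), if_neg h1, if_neg (by omega),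
            if_neg (by omega)]
          exact ⟨rfl, rfl⟩
      rw [if_neg (fun hh => this (hB.1 hh))]
      split_ifs <;> omega
    unfold cost
    refine (Finset.sum_le_sum key).trans ?_
    simp only [Finset.sum_add_distrib, Finset.sum_ite_eq', Finset.mem_range]
    have e : ∑ j ∈ Finset.range k,
        (if j < q then (c j (bZ j) + if j + 1 < q ∧ Bad s bZ j then 1 else 0) else 0) ≤ X := by
      rw [← Finset.sum_filter]
      convert hX using 2
      ext j; simp; omega
    have e' : ∀ a d, (if a < k then d else 0) ≤ d := fun a d => by split_ifs <;> omega
    have := e' i (c i β)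
    have := e' (q - 1) 1
    have := e' (i - 1) 1
    have := e' i 1
    have := e' (k - 1) 1
    omega

/-! ### The recursion along the cycle -/

/-- The averaging step. The trees occupy consecutive intervals of a circle of length
`n = ∑ j < k, s j`; the `j`-th one starts at `P j = ∑ j' < j, s j'`. Either the shift by `m` maps
one starting point to another one, or for some `i` the shifted starting points of index in
`[j₁, j₂]` lie strictly inside the `i`-th tree, and there are at least as many of them, relative to
the size of this tree, as `k` relative to `n - k`. -/
lemma exists_crossing {k m : ℕ} {s : ℕ → ℕ} (hk : 1 ≤ k) (hs : ∀ j, s (j + k) = s j)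
    (pos : ∀ j, 1 ≤ s j) (hm0 : 0 < m) (hmn : m < ∑ j ∈ Finset.range k, s j) :
    (∃ j i, ∑ x ∈ Finset.range j, s x + m = ∑ x ∈ Finset.range i, s x) ∨
    ∃ i j₁ j₂, j₁ ≤ j₂ ∧
      ∑ x ∈ Finset.range i, s x < ∑ x ∈ Finset.range j₁, s x + m ∧
      ∑ x ∈ Finset.range j₂, s x + m < ∑ x ∈ Finset.range (i + 1), s x ∧
      k * s i + (j₂ - j₁ + 1) * k ≤ (j₂ - j₁ + 1) * ∑ j ∈ Finset.range k, s j + k := by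
  set n := ∑ j ∈ Finset.range k, s j with hn
  set P : ℕ → ℕ := fun i => ∑ x ∈ Finset.range i, s x with hP
  change (∃ j i, P j + m = P i) ∨ ∃ i j₁ j₂, j₁ ≤ j₂ ∧ P i < P j₁ + m ∧ P j₂ + m < P (i + 1) ∧ _
  by_cases heq : ∃ j i, P j + m = P i
  · exact Or.inl heq
  right
  push Not at heq
  have hsucc : ∀ i, P (i + 1) = P i + s i := fun i => Finset.sum_range_succ _ _
  have hmono : StrictMono P := strictMono_nat_of_lt_succ fun i => by
    have := pos i; have := hsucc i; omega
  have hper : ∀ i, P (i + k) = P i + n := fun i => by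
    induction i with
    | zero => simp [hP, hn]
    | succ i ih =>
      have e : i + 1 + k = i + k + 1 := by omega
      rw [e, hsucc, hsucc, ih, hs]; omega
  -- the shifted starting points in the `i`-th tree are those of index in `[N i, N (i + 1))`
  have hex : ∀ i, ∃ j, P i ≤ P j + m := fun i => ⟨i, by omega⟩
  set N : ℕ → ℕ := fun i => Nat.find (hex i) with hN
  have hN1 : ∀ i j, P i ≤ P j + m ↔ N i ≤ j := fun i j => by
    constructor
    · intro h; exact Nat.find_min' _ h
    · intro h
      have := Nat.find_spec (hex i)
      have := hmono.monotone h
      simp only [hN] at this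
      omega
  have hNmono : Monotone N := monotone_nat_of_le_succ fun i =>
    (hN1 i _).1 (((hmono (Nat.lt_succ_self i)).le).trans ((hN1 (i + 1) _).2 le_rfl))
  have hN2 : N (2 * k) = N k + k := by
    apply le_antisymm
    · rw [← hN1, hper, show 2 * k = k + k by ring, hper]
      have := (hN1 k (N k)).2 le_rfl
      omega
    · have h1 := (hN1 (2 * k) (N (2 * k))).2 le_rfl
      rw [show 2 * k = k + k by ring, hper] at h1
      have hk0 : P k = n := rfl
      have h2 : k ≤ N (2 * k) := by
        by_contra hcon
        have := hmono (not_le.1 hcon)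
        rw [show k + k = 2 * k by ring] at h1
        omega
      obtain ⟨d, hd⟩ := Nat.exists_eq_add_of_le' h2
      rw [hd]
      rw [show k + k = 2 * k by ring, hd, hper] at h1
      have := (hN1 k d).1 (by omega)
      omega
  have hNsum : ∑ i ∈ Finset.range k, (N (k + i + 1) - N (k + i)) = k := by
    have : ∀ t, ∑ i ∈ Finset.range t, (N (k + i + 1) - N (k + i)) = N (k + t) - N k := fun t => by
      induction t with
      | zero => simp
      | succ t ih =>
        rw [Finset.sum_range_succ, ih]
        have := hNmono (show k ≤ k + t by omega)
        have := hNmono (show k + t ≤ k + t + 1 by omega)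
        rw [← add_assoc]; omega
    rw [this, ← two_mul, hN2]; omega
  have hssum : ∑ i ∈ Finset.range k, s (k + i) = n :=
    Finset.sum_congr rfl fun i _ => by rw [add_comm, hs]
  have hkn : k ≤ n := by
    have : ∑ j ∈ Finset.range k, 1 ≤ n := Finset.sum_le_sum fun j _ => pos j
    simpa using this
  obtain ⟨i, hi1, hi2⟩ : ∃ i, 1 ≤ N (i + 1) - N i ∧
      k * s i + (N (i + 1) - N i) * k ≤ (N (i + 1) - N i) * n + k := by
    by_contra hcon
    push Not at hcon
    have hle : ∀ i, (N (i + 1) - N i) * n + k ≤ k * s i + (N (i + 1) - N i) * k := fun i => by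
      rcases Nat.eq_zero_or_pos (N (i + 1) - N i) with h0 | h0
      · rw [h0]; have := Nat.mul_le_mul_left k (pos i); omega
      · exact (hcon i h0).le
    obtain ⟨i₀, hi₀, hi₀'⟩ : ∃ i ∈ Finset.range k, N (k + i + 1) - N (k + i) ≠ 0 :=
      Finset.exists_ne_zero_of_sum_ne_zero (by rw [hNsum]; omega)
    have hlt := Finset.sum_lt_sum (fun i (_ : i ∈ Finset.range k) => hle (k + i))
      ⟨i₀, hi₀, hcon (k + i₀) (by omega)⟩
    simp only [Finset.sum_add_distrib, ← Finset.sum_mul, ← Finset.mul_sum, hNsum, hssum,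
      Finset.sum_const, Finset.card_range, smul_eq_mul] at hlt
    omega
  have hlast : P (N (i + 1) - 1) + m < P (i + 1) := by
    by_contra hcon
    have := (hN1 (i + 1) _).1 (not_lt.1 hcon)
    omega
  refine ⟨i, N i, N (i + 1) - 1, by omega, ?_, hlast, ?_⟩
  · exact lt_of_le_of_ne ((hN1 i _).2 le_rfl) (heq _ _).symm
  · rwa [show N (i + 1) - 1 - N i + 1 = N (i + 1) - N i by omega]

lemma sum_range_add_shift (f : ℕ → ℕ) (a b : ℕ) :
    ∑ x ∈ Finset.range (a + b), f x =
      ∑ x ∈ Finset.range a, f x + ∑ x ∈ Finset.range b, f (x + a) := by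
  rw [Finset.sum_range_add]; simp [add_comm]

/-- The inequality behind the recursion: the price `K z / q` for a path of `q` vertices in a tree of
size `z`, plus `D u / (z + 1) + 4` for the current step, is at most `K (ρ + 1)`. -/
lemma step_ineq {D ρ q z u : ℝ} (hD : 0 ≤ D) (hq : 1 ≤ q) (hqz : q ≤ z) (hzu : z + 1 ≤ u)
    (hu : u ≤ ρ * q + 1) :
    (D + 4) * z / q + D * u / (z + 1) + 4 ≤ (D + 4) * (ρ + 1) := by
  have hq0 : 0 < q := by linarith
  have hz0 : 0 < z := by linarith
  have hzρ : z ≤ ρ * q := by linarith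
  set r := ρ * q / z with hr
  have hr1 : 1 ≤ r := by rw [hr, le_div_iff₀ hz0]; linarith
  have h1 : u / (z + 1) ≤ r := by
    rw [hr, div_le_div_iff₀ (by linarith) hz0]
    nlinarith
  set y := z / q with hy
  have hy1 : 1 ≤ y := by rw [hy, le_div_iff₀ hq0]; linarith
  have hρ : ρ = r * y := by rw [hr, hy]; field_simp
  have e1 : (D + 4) * z / q = (D + 4) * y := by rw [hy]; ring
  have e2 : D * u / (z + 1) = D * (u / (z + 1)) := by ring
  rw [e1, e2, hρ]
  have : D * (u / (z + 1)) ≤ D * r := mul_le_mul_of_nonneg_left h1 hD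
  have : 0 ≤ (r - 1) * (y - 1) := mul_nonneg (by linarith) (by linarith)
  have : 0 ≤ D * ((r - 1) * (y - 1)) := mul_nonneg hD this
  nlinarith

/-- Any number `m` of vertices can be chosen at cost at most `(Δ + 4) n / k`. -/
theorem exists_solvable (Δ : ℕ) : ∀ (k : ℕ) (s : ℕ → ℕ) (c : ℕ → ℕ → ℕ), 1 ≤ k →
    TreeCycle Δ k s c → ∀ m ≤ ∑ j ∈ Finset.range k, s j,
    ∃ X : ℕ, (X : ℝ) ≤ (Δ + 4) * ((∑ j ∈ Finset.range k, s j : ℕ) : ℝ) / k ∧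
      Solvable k s c m X := by
  intro k
  induction k using Nat.strong_induction_on with
  | _ k IH =>
  intro s c hk h m hmn
  set n := ∑ j ∈ Finset.range k, s j with hn
  have hkn : k ≤ n := by
    have : ∑ j ∈ Finset.range k, 1 ≤ n := Finset.sum_le_sum fun j _ => h.pos j
    simpa using this
  have hk' : (1 : ℝ) ≤ k := by exact_mod_cast hk
  have hkn' : (1 : ℝ) ≤ (n : ℝ) / k := by
    rw [le_div_iff₀ (by linarith)]; rw [one_mul]; exact_mod_cast hkn
  have hΔ : (0 : ℝ) ≤ Δ := Nat.cast_nonneg _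
  have trivial_case : ∀ X : ℕ, (X : ℝ) ≤ 4 → (X : ℝ) ≤ (Δ + 4) * (n : ℝ) / k := fun X hX => by
    rw [mul_div_assoc]; nlinarith
  rcases Nat.eq_zero_or_pos m with rfl | hm0
  · refine ⟨0, trivial_case 0 (by norm_num), fun _ => 0, fun _ => rfl, fun _ => Nat.zero_le _,
      by simp, ?_⟩
    simp [cost, Bad, h.c_zero]
  rcases hmn.eq_or_lt with rfl | hmn
  · refine ⟨0, trivial_case 0 (by norm_num), s, h.s_per, fun _ => le_rfl, rfl, ?_⟩
    simp [cost, Bad, h.c_full]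
  have hsucc : ∀ i, ∑ x ∈ Finset.range (i + 1), s x = ∑ x ∈ Finset.range i, s x + s i :=
    fun i => Finset.sum_range_succ _ _
  have hmono : StrictMono (fun i => ∑ x ∈ Finset.range i, s x) :=
    strictMono_nat_of_lt_succ fun i => by have := h.pos i; have := hsucc i; omega
  have hshift := fun r => sum_range_shift k s h.s_per r
  have hper : ∀ i, ∑ x ∈ Finset.range (i + k), s x = ∑ x ∈ Finset.range i, s x + n := fun i => by
    rw [sum_range_add_shift, hshift]
  -- the vertices of the trees `j, …, i - 1` and `β` vertices of the `i`-th tree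
  have direct : ∀ j i β, j ≤ i → i < j + k → β ≤ s i →
      ∑ x ∈ Finset.range j, s x + m = ∑ x ∈ Finset.range i, s x + β →
      Solvable k s c m (0 + c i β + 4) := fun j i β hji hij hβ hm => by
    obtain ⟨d, rfl⟩ := Nat.exists_eq_add_of_le hji
    have e := sum_range_add_shift s j d
    refine Solvable.unshift hk h (r := j) ?_
    have := glue (h.shift j) (q := 0) (i := d) (β := β) (m := m) (X := 0) (by omega) (by omega)
      (by rw [add_comm d j]; exact hβ) (fun _ => 0) (by simp) (by simp; omega) (by simp)
    rwa [add_comm d j] at this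
  rcases exists_crossing hk h.s_per h.pos hm0 hmn with ⟨j, i, hji⟩ | ⟨i, j₁, j₂, hj, h1, h2, h3⟩
  · have hij : j < i := hmono.lt_iff_lt.1 (show ∑ x ∈ Finset.range j, s x < _ by omega)
    have hik : i < j + k := hmono.lt_iff_lt.1 (by
      show ∑ x ∈ Finset.range i, s x < ∑ x ∈ Finset.range (j + k), s x
      rw [hper]; omega)
    refine ⟨_, trivial_case _ ?_, direct j i 0 hij.le hik (by omega) (by omega)⟩
    rw [h.c_zero]; norm_num
  have hj2i : j₂ ≤ i := by
    have : j₂ < i + 1 := hmono.lt_iff_lt.1 (show ∑ x ∈ Finset.range j₂, s x < _ by omega)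
    omega
  have hik : i < j₁ + k := hmono.lt_iff_lt.1 (by
    show ∑ x ∈ Finset.range i, s x < ∑ x ∈ Finset.range (j₁ + k), s x
    rw [hper]; omega)
  rw [hsucc] at h2
  obtain ⟨q, rfl⟩ := Nat.exists_eq_add_of_le hj
  rw [show j₁ + q - j₁ + 1 = q + 1 by omega] at h3
  have hz := sum_range_add_shift s j₁ q
  set z := ∑ x ∈ Finset.range q, s (x + j₁) with hzdef
  obtain ⟨o, ho⟩ : ∃ o, ∑ x ∈ Finset.range j₁, s x + m = ∑ x ∈ Finset.range i, s x + o :=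
    ⟨_, (Nat.add_sub_of_le h1.le).symm⟩
  by_cases hok : k * o ≤ n
  · obtain ⟨b, hb1, hb2, hb3⟩ := h.low i o o le_rfl (by omega)
    obtain rfl : b = o := by omega
    refine ⟨_, ?_, direct j₁ i b (by omega) hik (by omega) ho⟩
    have e1 : (c i b : ℝ) ≤ Δ * b := by
      have : c i b ≤ Δ * b := by simpa using hb3
      exact_mod_cast this
    have e2 : (b : ℝ) ≤ (n : ℝ) / k := by
      rw [le_div_iff₀ (by linarith), mul_comm]; exact_mod_cast hok
    push_cast
    rw [mul_div_assoc]
    nlinarith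
  -- `ρ = n / k - 1` bounds the average number of tree vertices per shifted starting point
  have hρ : (k : ℝ) * ((n : ℝ) / k) = n := by field_simp
  have hok' : (n : ℝ) / k < o := by
    rw [div_lt_iff₀ (by linarith), mul_comm]; exact_mod_cast not_le.1 hok
  have h3' : (s i : ℝ) - 1 ≤ (n / k - 1) * (q + 1) := by
    have : (k : ℝ) * s i + (q + 1) * k ≤ (q + 1) * n + k := by exact_mod_cast h3
    rw [← hρ] at this
    have : (k : ℝ) * (s i - 1) ≤ k * ((n / k - 1) * (q + 1)) := by nlinarith
    exact le_of_mul_le_mul_left this (by linarith)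
  have hq1 : 1 ≤ q := by
    by_contra hq0
    obtain rfl : q = 0 := by omega
    have : (o : ℝ) + 1 ≤ s i := by exact_mod_cast (show o + 1 ≤ s i by omega)
    simp only [Nat.cast_zero] at h3'
    linarith
  have hqz : q ≤ z := by
    have : ∑ j ∈ Finset.range q, 1 ≤ z := Finset.sum_le_sum fun j _ => h.pos _
    simpa using this
  obtain ⟨b, hb1, hb2, hb3⟩ := h.high i o (o + z) (by omega) (by omega)
  rw [show o + z - o + 1 = z + 1 by omega] at hb3
  have hmodj : ∀ j < q, j % q = j := fun j hj => Nat.mod_eq_of_lt hj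
  have hTC : TreeCycle Δ q (fun j => s (j % q + j₁)) (fun j => c (j % q + j₁)) :=
    { s_per := fun j => by simp
      c_per := fun j => by simp
      pos := fun j => h.pos _
      low := fun j => h.low _
      high := fun j => h.high _ }
  have hzsum : ∑ j ∈ Finset.range q, s (j % q + j₁) = z :=
    Finset.sum_congr rfl fun j hj => by rw [hmodj j (Finset.mem_range.1 hj)]
  obtain ⟨X, hX, bZ, -, hbZ, hbm, hcost⟩ := IH q (by omega) _ _ hq1 hTC (o + z - b) (by
    rw [hzsum]; omega)
  rw [hzsum] at hX
  refine ⟨X + c i b + 4, ?_, ?_⟩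
  · have hb3' : (c i b : ℝ) ≤ Δ * (s i - o) / (z + 1) := by
      rw [le_div_iff₀ (by positivity)]
      rw [← Nat.cast_sub (show o ≤ s i by omega)]
      exact_mod_cast hb3
    have hzu : (z : ℝ) + 1 ≤ s i - o := by
      have : (z : ℝ) + 1 + o ≤ s i := by exact_mod_cast (show z + 1 + o ≤ s i by omega)
      linarith
    have := step_ineq (D := Δ) (ρ := n / k - 1) (q := q) (z := z) (u := s i - o) hΔ
      (by exact_mod_cast hq1) (by exact_mod_cast hqz) hzu (by nlinarith)
    rw [sub_add_cancel, ← mul_div_assoc] at this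
    push_cast
    linarith
  · obtain ⟨d, rfl⟩ := Nat.exists_eq_add_of_le (show j₁ ≤ i by omega)
    have hd := sum_range_add_shift s j₁ d
    refine Solvable.unshift hk h (r := j₁) ?_
    rw [add_comm j₁ d] at *
    refine glue (h.shift j₁) (q := q) (i := d) (β := b) (m := m) (X := X) (by omega) (by omega)
      (by omega) bZ (fun j hj => ?_) ?_ ?_
    · have := hbZ j
      simp only [hmodj j hj] at this
      exact this
    · have := Finset.sum_range_add_sum_Ico (fun j => s (j + j₁)) (show q ≤ d by omega)
      rw [hbm]
      omega
    · refine le_trans (Finset.sum_le_sum fun j hj => ?_) hcost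
      have hj := Finset.mem_range.1 hj
      beta_reduce
      rw [hmodj j hj]
      refine Nat.add_le_add_left ?_ _
      by_cases hB : j + 1 < q ∧ Bad (fun j => s (j + j₁)) bZ j
      · have : Bad (fun j => s (j % q + j₁)) bZ j := by
          have := hB.2
          simp only [Bad, hmodj j hj, hmodj _ hB.1] at this ⊢
          exact this
        rw [if_pos hB, if_pos this]
      · rw [if_neg hB]; omega

/-! ### Cutting off a prescribed number of vertices in a rooted forest -/

/-- The descendants of `v`, including `v` itself, for the parent function `par`. -/
noncomputable def desc {V : Type} [Fintype V] (par : V → V) (v : V) : Finset V :=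
  Finset.univ.filter fun x => ∃ n : ℕ, par^[n] x = v

/-- The number of edges `{w, par w}` inside `S` with exactly one end in `B`. -/
noncomputable def innerCut {V : Type} (par : V → V) (S B : Finset V) : ℕ :=
  (S.filter fun w => par w ∈ S ∧ ¬ (w ∈ B ↔ par w ∈ B)).card

lemma mem_desc {V : Type} [Fintype V] {par : V → V} {v x : V} :
    x ∈ desc par v ↔ ∃ n : ℕ, par^[n] x = v := by simp [desc]

lemma mem_desc_par {V : Type} [Fintype V] {par : V → V} {v x : V} (hx : x ≠ v) :
    x ∈ desc par v ↔ par x ∈ desc par v := by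
  simp only [mem_desc]
  constructor
  · rintro ⟨n, hn⟩
    cases n with
    | zero => exact absurd hn hx
    | succ n => exact ⟨n, hn⟩
  · rintro ⟨n, hn⟩
    exact ⟨n + 1, hn⟩

/-- In a rooted forest, a descendant of `v` is `v` itself or a descendant of a child of `v`. -/
lemma desc_subset {V : Type} [Fintype V] {par : V → V} (v : V) :
    desc par v ⊆ insert v ((Finset.univ.filter fun c => c ≠ v ∧ par c = v).biUnion (desc par)) := by
  intro x hx
  obtain ⟨n, hn⟩ := mem_desc.1 hx
  induction n with
  | zero => exact Finset.mem_insert.2 (Or.inl hn)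
  | succ n ih =>
    by_cases h : par^[n] x = v
    · exact ih h
    · refine Finset.mem_insert_of_mem (Finset.mem_biUnion.2 ⟨par^[n] x, ?_, mem_desc.2 ⟨n, rfl⟩⟩)
      simp only [Finset.mem_filter, Finset.mem_univ, true_and]
      exact ⟨h, by rw [← Function.iterate_succ_apply' par n x]; exact hn⟩

/-- Any set `R` of more than `z` vertices meets the set of descendants of some vertex in at most
`z + 1`, but at least `(z + 1) / D` vertices: take a deepest vertex with the second property. -/
lemma exists_piece {V : Type} [Fintype V] {par : V → V} {root : V} {depth : V → ℕ} {D : ℕ}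
    (hD : 1 ≤ D) (hdepth : ∀ w, w ≠ root → depth (par w) < depth w) (hroot : par root = root)
    (hchild : ∀ v, (Finset.univ.filter fun c => c ≠ v ∧ par c = v).card ≤ D)
    (R : Finset V) (z : ℕ) (hR : z + 1 ≤ R.card) :
    ∃ v, (desc par v ∩ R).card ≤ z + 1 ∧ z + 1 ≤ D * (desc par v ∩ R).card := by
  have hall : ∀ d x, depth x ≤ d → x ∈ desc par root := fun d => by
    induction d with
    | zero =>
      intro x hx
      by_cases h : x = root
      · exact mem_desc.2 ⟨0, h⟩
      · have := hdepth x h; omega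
    | succ d ih =>
      intro x hx
      by_cases h : x = root
      · exact mem_desc.2 ⟨0, h⟩
      · exact (mem_desc_par h).2 (ih _ (by have := hdepth x h; omega))
  have hne : (Finset.univ.filter fun v => z + 1 ≤ D * (desc par v ∩ R).card).Nonempty := by
    refine ⟨root, ?_⟩
    have : desc par root ∩ R = R := Finset.inter_eq_right.2 fun x _ => hall _ x le_rfl
    simp only [Finset.mem_filter, Finset.mem_univ, true_and, this]
    nlinarith
  obtain ⟨v, hv, hmax⟩ := Finset.exists_max_image _ depth hne
  simp only [Finset.mem_filter, Finset.mem_univ, true_and] at hv hmax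
  refine ⟨v, ?_, hv⟩
  set C := Finset.univ.filter fun c => c ≠ v ∧ par c = v with hC
  have h1 : desc par v ∩ R ⊆ insert v (C.biUnion fun c => desc par c ∩ R) := by
    intro x hx
    have hx' := Finset.mem_inter.1 hx
    rcases Finset.mem_insert.1 (desc_subset v hx'.1) with h | h
    · exact Finset.mem_insert.2 (Or.inl h)
    · obtain ⟨c, hc, hxc⟩ := Finset.mem_biUnion.1 h
      exact Finset.mem_insert_of_mem
        (Finset.mem_biUnion.2 ⟨c, hc, Finset.mem_inter.2 ⟨hxc, hx'.2⟩⟩)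
  have h2 : (desc par v ∩ R).card ≤ ∑ c ∈ C, (desc par c ∩ R).card + 1 :=
    (Finset.card_le_card h1).trans
      ((Finset.card_insert_le _ _).trans (Nat.add_le_add_right Finset.card_biUnion_le _))
  have h3 : ∀ c ∈ C, D * (desc par c ∩ R).card ≤ z := fun c hc => by
    by_contra hcon
    simp only [hC, Finset.mem_filter, Finset.mem_univ, true_and] at hc
    have hcr : c ≠ root := by
      rintro rfl
      exact hc.1 (hroot.symm.trans hc.2)
    have h4 := hmax c (by omega)
    have h5 := hdepth c hcr
    rw [hc.2] at h5
    omega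
  have h4 : D * ∑ c ∈ C, (desc par c ∩ R).card ≤ D * z := by
    rw [Finset.mul_sum]
    refine (Finset.sum_le_card_nsmul C _ z h3).trans ?_
    rw [smul_eq_mul]
    exact Nat.mul_le_mul_right _ (hchild v)
  have h5 := Nat.le_of_mul_le_mul_left h4 (by omega)
  omega

/-- In a rooted forest with at most `D` children per vertex, some subset of `S` of size in the
window `[u - z, u]` can be separated from the rest of `S` by cutting `D u / (z + 1)` edges. -/
lemma exists_window {V : Type} [Fintype V] {par : V → V} {root : V} {depth : V → ℕ} {D : ℕ}
    (hD : 1 ≤ D) (hdepth : ∀ w, w ≠ root → depth (par w) < depth w) (hroot : par root = root)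
    (hchild : ∀ v, (Finset.univ.filter fun c => c ≠ v ∧ par c = v).card ≤ D)
    (S : Finset V) (u z : ℕ) (hu : u ≤ S.card) :
    ∃ B ⊆ S, u ≤ B.card + z ∧ B.card ≤ u ∧ innerCut par S B * (z + 1) ≤ D * u := by
  set T : Finset V → Finset V := fun Q => S ∩ Q.biUnion (desc par) with hT
  have hne : (Finset.univ.filter fun Q : Finset V =>
      (T Q).card ≤ u ∧ Q.card * (z + 1) ≤ D * (T Q).card).Nonempty := ⟨∅, by simp [hT]⟩
  obtain ⟨Q, hQ, hmax⟩ := Finset.exists_max_image _ (fun Q => (T Q).card) hne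
  simp only [Finset.mem_filter, Finset.mem_univ, true_and] at hQ hmax
  refine ⟨T Q, Finset.inter_subset_left, ?_, hQ.1, ?_⟩
  · by_contra hcon
    have hsub : T Q ⊆ S := Finset.inter_subset_left
    have hcard := Finset.card_sdiff_add_card_eq_card hsub
    obtain ⟨v, hv1, hv2⟩ := exists_piece hD hdepth hroot hchild (S \ T Q) z (by omega)
    have hins : T (insert v Q) = T Q ∪ (desc par v ∩ (S \ T Q)) := by
      ext x
      simp only [hT, Finset.biUnion_insert, Finset.mem_inter, Finset.mem_union, Finset.mem_sdiff]
      tauto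
    have hdisj : Disjoint (T Q) (desc par v ∩ (S \ T Q)) := by
      rw [Finset.disjoint_left]
      intro x hx hx'
      exact (Finset.mem_sdiff.1 (Finset.mem_inter.1 hx').2).2 hx
    have hc : (T (insert v Q)).card = (T Q).card + (desc par v ∩ (S \ T Q)).card := by
      rw [hins, Finset.card_union_of_disjoint hdisj]
    have hq := Finset.card_insert_le v Q
    have := hmax (insert v Q) ⟨by omega, by rw [hc]; nlinarith⟩
    have : 0 < (desc par v ∩ (S \ T Q)).card := by
      by_contra h0
      obtain h0 : (desc par v ∩ (S \ T Q)).card = 0 := by omega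
      rw [h0] at hv2; omega
    omega
  · have hsub : (S.filter fun w => par w ∈ S ∧ ¬ (w ∈ T Q ↔ par w ∈ T Q)) ⊆ Q := by
      intro w hw
      simp only [Finset.mem_filter] at hw
      obtain ⟨hwS, hpS, hw⟩ := hw
      by_contra hwQ
      apply hw
      simp only [hT, Finset.mem_inter, hwS, hpS, true_and, Finset.mem_biUnion]
      refine exists_congr fun a => and_congr_right fun ha => mem_desc_par ?_
      rintro rfl
      exact hwQ ha
    calc innerCut par S (T Q) * (z + 1) ≤ Q.card * (z + 1) :=
          Nat.mul_le_mul_right _ (Finset.card_le_card hsub)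
      _ ≤ D * (T Q).card := hQ.2
      _ ≤ D * u := Nat.mul_le_mul_left _ hQ.1

lemma innerCut_sdiff {V : Type} (par : V → V) (S B : Finset V) :
    innerCut par S (S \ B) = innerCut par S B := by
  unfold innerCut
  congr 1
  refine Finset.filter_congr fun w hw => and_congr_right fun hp => ?_
  simp only [Finset.mem_sdiff, hw, hp, true_and]
  tauto

/-- The minimum number of edges inside `S` separating `b` vertices of `S` from the others. -/
noncomputable def minInner {V : Type} (par : V → V) (S : Finset V) (b : ℕ) : ℕ :=
  sInf {k | ∃ B ⊆ S, B.card = b ∧ innerCut par S B = k}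

lemma minInner_le {V : Type} {par : V → V} {S B : Finset V} (h : B ⊆ S) :
    minInner par S B.card ≤ innerCut par S B := Nat.sInf_le ⟨B, h, rfl, rfl⟩

lemma exists_minInner {V : Type} (par : V → V) (S : Finset V) (b : ℕ) (hb : b ≤ S.card) :
    ∃ B ⊆ S, B.card = b ∧ innerCut par S B = minInner par S b := by
  obtain ⟨B, hB, hBc⟩ := Finset.exists_subset_card_eq hb
  exact Nat.sInf_mem (s := {k | ∃ B ⊆ S, B.card = b ∧ innerCut par S B = k}) ⟨_, B, hB, hBc, rfl⟩

/-! ### From sizes to sets of vertices -/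

/-- A rooted tree with a path `v 0, …, v L` starting at the root, encoded by the parent function,
contains for every `m` a set of `m` vertices that is separated from its complement by at most
`(D + 4) n / (L + 1)` edges. -/
lemma exists_cheap_set {V : Type} [Fintype V] {par : V → V} {root : V} {depth : V → ℕ} {D : ℕ}
    (hD : 1 ≤ D) (hdepth : ∀ w, w ≠ root → depth (par w) < depth w) (hroot : par root = root)
    (hchild : ∀ v, (Finset.univ.filter fun c => c ≠ v ∧ par c = v).card ≤ D)
    (L : ℕ) (v : ℕ → V) (hv0 : v 0 = root) (hv : ∀ j < L, par (v (j + 1)) = v j)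
    (hinj : ∀ i ≤ L, ∀ j ≤ L, v i = v j → i = j) (m : ℕ) (hm : m ≤ Fintype.card V) :
    ∃ B : Finset V, B.card = m ∧
      ((Finset.univ.filter fun w => ¬ (w ∈ B ↔ par w ∈ B)).card : ℝ) ≤
        (D + 4) * (Fintype.card V : ℝ) / ((L + 1 : ℕ) : ℝ) := by
  -- `idx x` is the position on the path of the first ancestor of `x` that lies on the path
  obtain ⟨idx, hidxL, hidxv, hidxp⟩ : ∃ idx : V → ℕ, (∀ x, idx x ≤ L) ∧
      (∀ j ≤ L, idx (v j) = j) ∧ (∀ x, (∀ j ≤ L, x ≠ v j) → idx (par x) = idx x) := by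
    have hex : ∀ d x, depth x ≤ d → ∃ n : ℕ, ∃ j ≤ L, par^[n] x = v j := fun d => by
      induction d with
      | zero =>
        intro x hx
        by_cases h : x = root
        · exact ⟨0, 0, Nat.zero_le _, h.trans hv0.symm⟩
        · have := hdepth x h; omega
      | succ d ih =>
        intro x hx
        by_cases h : x = root
        · exact ⟨0, 0, Nat.zero_le _, h.trans hv0.symm⟩
        · obtain ⟨n, j, hj, hn⟩ := ih (par x) (by have := hdepth x h; omega)
          exact ⟨n + 1, j, hj, hn⟩
    have hex : ∀ x, ∃ n : ℕ, ∃ j ≤ L, par^[n] x = v j := fun x => hex _ x le_rfl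
    choose idx h1 h2 using fun x => Nat.find_spec (hex x)
    refine ⟨idx, h1, fun j hj => ?_, fun x hx => ?_⟩
    · have h0 : Nat.find (hex (v j)) = 0 := (Nat.find_eq_zero _).2 ⟨j, hj, rfl⟩
      have := h2 (v j)
      rw [h0] at this
      exact (hinj _ hj _ (h1 _) this).symm
    · have h0 : Nat.find (hex x) = Nat.find (hex (par x)) + 1 :=
        Nat.find_comp_succ (hex x) (hex (par x)) (by
          rintro ⟨j, hj, h⟩
          exact hx j hj h)
      have := h2 x
      rw [h0, Function.iterate_succ_apply, h2 (par x)] at this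
      exact hinj _ (h1 _) _ (h1 _) this
  set S : ℕ → Finset V := fun j => Finset.univ.filter fun x => idx x = j with hS
  have hmemS : ∀ x j, x ∈ S j ↔ idx x = j := fun x j => by simp [hS]
  have hTC : TreeCycle D (L + 1) (fun j => (S (j % (L + 1))).card)
      (fun j => minInner par (S (j % (L + 1)))) :=
    { s_per := fun j => by simp
      c_per := fun j => by simp
      pos := fun j => by
        have : j % (L + 1) ≤ L := Nat.lt_succ_iff.1 (Nat.mod_lt _ (by omega))
        exact Finset.card_pos.2 ⟨v (j % (L + 1)), (hmemS _ _).2 (hidxv _ this)⟩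
      low := fun j lo hi hlh hhs => by
        obtain ⟨B, hB, h1, h2, h3⟩ := exists_window hD hdepth hroot hchild _ hi (hi - lo) hhs
        exact ⟨B.card, by omega, h2, (Nat.mul_le_mul_right _ (minInner_le hB)).trans h3⟩
      high := fun j lo hi hlh hhs => by
        obtain ⟨B, hB, h1, h2, h3⟩ := exists_window hD hdepth hroot hchild
          (S (j % (L + 1))) ((S (j % (L + 1))).card - lo) (hi - lo) (by omega)
        have hc := Finset.card_sdiff_add_card_eq_card hB
        refine ⟨_, ?_, ?_, (Nat.mul_le_mul_right _
          (minInner_le (B := S (j % (L + 1)) \ B) Finset.sdiff_subset)).trans ?_⟩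
        · omega
        · omega
        · rwa [innerCut_sdiff] }
  have hmod : ∀ j < L + 1, j % (L + 1) = j := fun j hj => Nat.mod_eq_of_lt hj
  have hsum : ∑ j ∈ Finset.range (L + 1), (S (j % (L + 1))).card = Fintype.card V := by
    rw [← Finset.card_univ, Finset.card_eq_sum_card_fiberwise (f := idx)
      (t := Finset.range (L + 1)) (fun x _ => by simpa using Nat.lt_succ_iff.2 (hidxL x))]
    exact Finset.sum_congr rfl fun j hj => by rw [hmod j (Finset.mem_range.1 hj)]
  obtain ⟨X, hX, b, -, hbs, hbm, hcost⟩ := exists_solvable D (L + 1) _ _ (by omega) hTC m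
    (by rw [hsum]; exact hm)
  rw [hsum] at hX
  have hbs' : ∀ j ≤ L, b j ≤ (S j).card := fun j hj => by
    have := hbs j
    simp only [hmod j (by omega)] at this
    exact this
  choose! B hBS hBc hBi using fun j (hj : j ≤ L) => exists_minInner par (S j) (b j) (hbs' j hj)
  set U := (Finset.range (L + 1)).biUnion B with hU
  have hmemU : ∀ x, x ∈ U ↔ x ∈ B (idx x) := fun x => by
    simp only [hU, Finset.mem_biUnion, Finset.mem_range]
    constructor
    · rintro ⟨j, hj, hx⟩
      rwa [(hmemS x j).1 (hBS j (by omega) hx)]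
    · intro hx
      exact ⟨idx x, Nat.lt_succ_iff.2 (hidxL x), hx⟩
  have hUc : U.card = m := by
    rw [hU, Finset.card_biUnion, ← hbm]
    · exact Finset.sum_congr rfl fun j hj => hBc j (by have := Finset.mem_range.1 hj; omega)
    · intro i hi j hj hij
      refine Finset.disjoint_left.2 fun x hx hx' => ?_
      rw [Finset.mem_coe] at hi hj
      have h1 := (hmemS x i).1 (hBS i (by have := Finset.mem_range.1 hi; omega) hx)
      have h2 := (hmemS x j).1 (hBS j (by have := Finset.mem_range.1 hj; omega) hx')
      exact hij (h1.symm.trans h2)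
  refine ⟨U, hUc, le_trans ?_ hX⟩
  norm_cast
  refine le_trans ?_ hcost
  set sz := fun j => (S (j % (L + 1))).card with h_sz
  -- a cut edge lies inside one of the trees, or it is a path edge between two trees
  have hsub : (Finset.univ.filter fun w => ¬ (w ∈ U ↔ par w ∈ U)) ⊆
      ((Finset.range (L + 1)).biUnion fun j =>
        (S j).filter fun w => par w ∈ S j ∧ ¬ (w ∈ B j ↔ par w ∈ B j)) ∪
      ((Finset.range (L + 1)).filter fun j => Bad sz b j).image (fun j => v (j + 1)) := by
    intro w hw
    simp only [Finset.mem_filter, Finset.mem_univ, true_and] at hw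
    rw [hmemU, hmemU] at hw
    rw [Finset.mem_union]
    by_cases h : idx (par w) = idx w
    · left
      rw [h] at hw
      refine Finset.mem_biUnion.2 ⟨idx w, Finset.mem_range.2 (Nat.lt_succ_iff.2 (hidxL w)), ?_⟩
      exact Finset.mem_filter.2 ⟨(hmemS _ _).2 rfl, (hmemS _ _).2 h, hw⟩
    · right
      have : ∃ j ≤ L, w = v j := by
        by_contra hcon
        push Not at hcon
        exact h (hidxp w hcon)
      obtain ⟨j, hj, rfl⟩ := this
      cases j with
      | zero => rw [hv0, hroot] at h; exact absurd rfl h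
      | succ j =>
        refine Finset.mem_image.2 ⟨j, Finset.mem_filter.2
          ⟨Finset.mem_range.2 (by omega), fun hbad => hw ?_⟩, rfl⟩
        rw [hv j (by omega), hidxv _ hj, hidxv j (by omega)]
        have hjS := (hmemS _ _).2 (hidxv j (by omega))
        have hjS' := (hmemS _ _).2 (hidxv (j + 1) hj)
        rw [← hBc j (by omega), ← hBc (j + 1) hj] at hbad
        simp only [h_sz, hmod j (by omega), hmod (j + 1) (by omega)] at hbad
        rcases hbad with ⟨h1, h2⟩ | ⟨h1, h2⟩
        · simp [Finset.card_eq_zero.1 h1, Finset.card_eq_zero.1 h2]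
        · rw [Finset.eq_of_subset_of_card_le (hBS j (by omega)) h1.ge,
            Finset.eq_of_subset_of_card_le (hBS (j + 1) hj) h2.ge]
          simp [hjS, hjS']
  refine (Finset.card_le_card hsub).trans ((Finset.card_union_le _ _).trans ?_)
  unfold cost
  rw [Finset.sum_add_distrib, ← Finset.card_filter]
  refine Nat.add_le_add (Finset.card_biUnion_le.trans (Finset.sum_le_sum fun j hj => ?_))
    Finset.card_image_le
  have hj := Finset.mem_range.1 hj
  beta_reduce
  rw [hmod j hj]
  exact (hBi j (by omega)).le

/-! ### Bisections of trees with a long path -/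

open SimpleGraph in
/-- The parent function of a tree rooted at `u`: the vertex before `w` on the path from `u`. -/
lemma exists_parent {V : Type} {G : SimpleGraph V} (hG : G.IsTree) (u : V) :
    ∃ (par : V → V) (depth : V → ℕ), par u = u ∧
      (∀ w, w ≠ u → G.Adj (par w) w ∧ depth (par w) < depth w) ∧
      (∀ x y, G.Adj x y → par x = y ∨ par y = x) ∧
      ∀ (w : V) (p : G.Walk u w), p.IsPath → ∀ j < p.length,
        par (p.getVert (j + 1)) = p.getVert j := by
  choose q hq hu using fun w => hG.existsUnique_path u w
  have hu : ∀ w (p : G.Walk u w), p.IsPath → p = q w := fun w p hp => hu w p hp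
  have hpen : ∀ w (p : G.Walk u w), p.IsPath → (q w).penultimate = p.penultimate :=
    fun w p hp => by rw [hu w p hp]
  refine ⟨fun w => (q w).penultimate, fun w => (q w).length, ?_, fun w hw => ?_, fun x y h => ?_,
    fun w p hp j hj => ?_⟩
  · exact hpen u Walk.nil Walk.IsPath.nil
  · have hnil : ¬ (q w).Nil := Walk.not_nil_of_ne hw.symm
    refine ⟨(q w).adj_penultimate hnil, ?_⟩
    have hd := hu _ (q w).dropLast (hq w).dropLast
    have hpos : 0 < (q w).length := by
      by_contra h0
      exact hnil (Walk.length_eq_zero_iff.1 (by omega))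
    have : (q w).dropLast.length < (q w).length := by
      rw [Walk.length_dropLast]; omega
    rwa [hd] at this
  · by_cases hy : y ∈ (q x).support
    · exact Or.inl (hG.isAcyclic.eq_penultimate_of_adj_end (hq x) h hy).symm
    · right
      have := hpen y ((q x).concat h) ((hq x).concat hy h)
      simpa using this
  · have h1 := hpen _ (p.take (j + 1)) (hp.take _)
    beta_reduce
    rw [h1, Walk.penultimate, Walk.take_length, Walk.take_getVert]
    congr 1
    omega

/-- A tree with a path of `L` edges has minimum bisection width at most `(Δ + 5) n / (L + 1)`. -/
lemma minBis_le {V : Type} [Fintype V] {G : SimpleGraph V} (hG : G.IsTree) {Δ : ℕ}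
    (hΔ : maxDeg G ≤ Δ) {u v : V} (p : G.Walk u v) (hp : p.IsPath) :
    (minBis G : ℝ) ≤ (Δ + 5) * (Fintype.card V : ℝ) / (p.length + 1) := by
  obtain ⟨par, depth, hroot, hpar, hadj, hpath⟩ := exists_parent hG u
  have hchild : ∀ w, (Finset.univ.filter fun c => c ≠ w ∧ par c = w).card ≤ Δ + 1 := fun w => by
    have h1 : Nat.card {x // G.Adj w x} ≤ Δ :=
      (Finset.le_sup (f := fun w => Nat.card {x // G.Adj w x}) (Finset.mem_univ w)).trans hΔ
    rw [Nat.card_eq_fintype_card, Fintype.card_subtype] at h1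
    refine (Finset.card_le_card ?_).trans (h1.trans (Nat.le_succ _))
    intro c hc
    simp only [Finset.mem_filter, Finset.mem_univ, true_and] at hc ⊢
    have hcu : c ≠ u := by
      rintro rfl
      exact hc.1 (hroot.symm.trans hc.2)
    exact hc.2 ▸ (hpar c hcu).1
  obtain ⟨B, hBc, hB⟩ := exists_cheap_set (D := Δ + 1) (by omega) (fun w hw => (hpar w hw).2) hroot
    hchild p.length p.getVert p.getVert_zero (hpath v p hp)
    (fun i hi j hj h => hp.getVert_injOn hi hj h) (Fintype.card V / 2) (Nat.div_le_self _ _)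
  have hbis : IsBisection B := by
    unfold IsBisection
    rw [Finset.card_compl, hBc]
    omega
  have h1 : minBis G ≤ cutWidth G B := Nat.sInf_le ⟨B, hbis, rfl⟩
  have h2 : cutWidth G B ≤ (Finset.univ.filter fun w => ¬ (w ∈ B ↔ par w ∈ B)).card := by
    unfold cutWidth
    set F := (Finset.univ.filter fun w => ¬ (w ∈ B ↔ par w ∈ B)) with hF
    have hsub : {e : Sym2 V | ∃ x y, G.Adj x y ∧ x ∈ B ∧ y ∉ B ∧ e = s(x, y)} ⊆
        ((F.image fun w => s(w, par w) : Finset (Sym2 V)) : Set (Sym2 V)) := by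
      rintro e ⟨x, y, hxy, hx, hy, rfl⟩
      rw [Finset.mem_coe, Finset.mem_image]
      rcases hadj x y hxy with h | h
      · exact ⟨x, by simp [hF, h, hx, hy], by rw [h]⟩
      · exact ⟨y, by simp [hF, h, hx, hy], by rw [h, Sym2.eq_swap]⟩
    have h3 := Set.ncard_le_ncard hsub (Finset.finite_toSet _)
    rw [Set.ncard_coe_finset] at h3
    exact h3.trans Finset.card_image_le
  have h3 : (minBis G : ℝ) ≤
      ((Finset.univ.filter fun w => ¬ (w ∈ B ↔ par w ∈ B)).card : ℝ) := by
    exact_mod_cast h1.trans h2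
  refine (h3.trans hB).trans (le_of_eq ?_)
  push_cast
  ring

end MinBisection

/-- For every `Δ ∈ ℕ` and every `c > 0`, there is an `α > 0` such that:
if `T` is a tree on `n ≥ 2` vertices with maximum degree at most `Δ` and
`MinBis(T) ≥ c log₂ n`, then `T` does not contain a path with `α n / log₂ n` or more edges. -/
theorem MinBisection.no_long_path_of_large_minBis (Δ : ℕ) (c : ℝ) (hc : 0 < c) :
    ∃ α : ℝ, 0 < α ∧
      ∀ (V : Type) [Fintype V] (G : SimpleGraph V), G.IsTree →
        2 ≤ Fintype.card V → maxDeg G ≤ Δ →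
        c * Real.logb 2 (Fintype.card V) ≤ (minBis G : ℝ) →
        ∀ (u v : V) (p : G.Walk u v), p.IsPath →
          (p.length : ℝ) < α * (Fintype.card V : ℝ) / Real.logb 2 (Fintype.card V) := by
  refine ⟨(Δ + 5) / c, by positivity, fun V _ G hG hn hΔ hbis u v p hp => ?_⟩
  have hn' : (2 : ℝ) ≤ Fintype.card V := by exact_mod_cast hn
  have hlog : 0 < Real.logb 2 (Fintype.card V) := Real.logb_pos (by norm_num) (by linarith)
  have h := hbis.trans (minBis_le hG hΔ p hp)
  have hL : (0 : ℝ) ≤ p.length := Nat.cast_nonneg _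
  rw [le_div_iff₀ (by linarith)] at h
  rw [lt_div_iff₀ hlog, div_mul_eq_mul_div, lt_div_iff₀ hc]
  nlinarith [mul_pos hc hlog]
end
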